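/- Let Ω ⊂ ℂⁿ be a bounded pseudoconvex domain, φ ∈ SPSH(Ω), u a φ-admissible test function, and k ∈ ℕ. For t ∈ [0,1] let K_{k,t} : Ω×Ω → ℂ be the reproducing kernel of H(k(φ+tu)), and set S_k(t) := Σ_{m=0}^∞ (1/m!) ∫_{Ω^m} det[K_{k,0}(z_i,z_j)]_{1≤i,j≤m} ∏_{l=1}^m (e^{−k t u(z_l)} − 1) e^{−kφ(z_l)} dλ(z_1)⋯dλ(z_m). Then S_k(t) > 0 for all t ∈ [0,1], the function t ↦ log S_k(t) is differentiable, and (d/dt) log S_k(t) = −k ∫_Ω K_{k,t}(w,w) u(w) e^{−k(φ(w)+t u(w))} dλ(w). -/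

import Mathlib

open MeasureTheory Complex Filter
open scoped ENNReal Topology BigOperators Real ComplexOrder

noncomputable section

variable {n : ℕ}

/-- Wirtinger derivative `∂f/∂z_j` of a function on `ℂⁿ`. -/
def wDeriv (f : (Fin n → ℂ) → ℂ) (j : Fin n) (z : Fin n → ℂ) : ℂ :=
  (1/2) * (fderiv ℝ f z (Pi.single j 1) - Complex.I * fderiv ℝ f z (Pi.single j Complex.I))

/-- Wirtinger derivative `∂f/∂z̄_j` of a function on `ℂⁿ`. -/
def wDerivBar (f : (Fin n → ℂ) → ℂ) (j : Fin n) (z : Fin n → ℂ) : ℂ :=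
  (1/2) * (fderiv ℝ f z (Pi.single j 1) + Complex.I * fderiv ℝ f z (Pi.single j Complex.I))

/-- Complex Hessian `H_φ(z) = (∂²φ/∂z_j∂z̄_k)_{j,k}` of a real-valued function on `ℂⁿ`. -/
def cHessian (φ : (Fin n → ℂ) → ℝ) (z : Fin n → ℂ) : Matrix (Fin n) (Fin n) ℂ :=
  Matrix.of fun j k => wDerivBar (fun w => wDeriv (fun v => (φ v : ℂ)) j w) k z

/-- A function is plurisubharmonic on `Ω` if it is upper semicontinuous on `Ω` and satisfies
the sub-mean value inequality on every closed complex disc contained in `Ω`. -/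
def PlurisubharmonicOn (Ω : Set (Fin n → ℂ)) (f : (Fin n → ℂ) → ℝ) : Prop :=
  UpperSemicontinuousOn f Ω ∧
  ∀ a b : Fin n → ℂ, (∀ ζ : ℂ, ‖ζ‖ ≤ 1 → a + ζ • b ∈ Ω) →
    f a ≤ (2 * π)⁻¹ * ∫ θ in (0:ℝ)..(2*π), f (a + Complex.exp (θ * Complex.I) • b)

/-- A (bounded) open set `Ω ⊆ ℂⁿ` is pseudoconvex iff `z ↦ -log dist(z, Ωᶜ)` is
plurisubharmonic on `Ω`. -/
def Pseudoconvex (Ω : Set (Fin n → ℂ)) : Prop :=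
  PlurisubharmonicOn Ω fun z => -Real.log (Metric.infDist z Ωᶜ)

/-- `φ ∈ SPSH(Ω)`: smooth on `Ω` with positive definite complex Hessian at every point of `Ω`. -/
def SPSHOn (Ω : Set (Fin n → ℂ)) (φ : (Fin n → ℂ) → ℝ) : Prop :=
  ContDiffOn ℝ (⊤ : ℕ∞) φ Ω ∧ ∀ z ∈ Ω, (cHessian φ z).PosDef

/-- Squared weighted Bergman norm `∫_Ω |f|² e^{-ψ} dλ` (as an extended real,
so that finiteness encodes square-integrability). -/
def wnorm2 (Ω : Set (Fin n → ℂ)) (ψ : (Fin n → ℂ) → ℝ) (f : (Fin n → ℂ) → ℂ) : ℝ≥0∞ :=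
  ∫⁻ z in Ω, ENNReal.ofReal (‖f z‖ ^ 2 * Real.exp (-ψ z))

/-- Membership in the weighted Bergman space `H(ψ)`: holomorphic on `Ω` and
`∫_Ω |f|² e^{-ψ} dλ < ∞`. -/
def MemBergman (Ω : Set (Fin n → ℂ)) (ψ : (Fin n → ℂ) → ℝ) (f : (Fin n → ℂ) → ℂ) : Prop :=
  DifferentiableOn ℂ f Ω ∧ wnorm2 Ω ψ f < ⊤

/-- The diagonal of the Bergman kernel of `H(ψ)`:
`B_ψ(z) = sup {|f(z)|² : f ∈ H(ψ), ‖f‖_ψ ≤ 1}`. -/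
def bergmanDiag (Ω : Set (Fin n → ℂ)) (ψ : (Fin n → ℂ) → ℝ) (z : Fin n → ℂ) : ℝ :=
  sSup {t : ℝ | ∃ f, DifferentiableOn ℂ f Ω ∧ wnorm2 Ω ψ f ≤ 1 ∧ t = ‖f z‖ ^ 2}

/-- Weighted inner product `⟨f,g⟩_ψ = ∫_Ω f ḡ e^{-ψ} dλ`. -/
def wInner (Ω : Set (Fin n → ℂ)) (ψ : (Fin n → ℂ) → ℝ) (f g : (Fin n → ℂ) → ℂ) : ℂ :=
  ∫ z in Ω, f z * (starRingEnd ℂ) (g z) * Real.exp (-ψ z)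

/-- Mixed determinants `D_j(A,B)`, defined so that
`det (s•A + r•B) = ∑_j (n choose j) s^j r^(n-j) D_j(A,B)`: explicitly `D_j(A,B)` is
`(n choose j)⁻¹` times the sum over all `j`-element subsets `S` of the row indices of the
determinant of the matrix whose rows are those of `A` on `S` and those of `B` elsewhere. -/
def mixedDet (A B : Matrix (Fin n) (Fin n) ℂ) (j : ℕ) : ℂ :=
  ((n.choose j : ℂ))⁻¹ *
    ∑ S ∈ Finset.univ.powersetCard j,
      Matrix.det (Matrix.of fun i k => if i ∈ S then A i k else B i k)

/-!
Let `F(s) = -k ∫ K_s(w, w) u(w) e^{-k(φ + s u)(w)} dλ(w)`; the point is that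
`S(t) = exp ∫₀ᵗ F(s) ds` with `F` real and continuous. For the span of finitely many members `b` of
the Bergman space this is a statement about matrices: by Andréief's identity the Fredholm series of
the reproducing kernel of the span sums to `det G_t / det G_0`, where `G_t` is the Gram matrix of
`b` in `H(k(φ + t u))`, and by Jacobi's formula `(log det G_t)' = tr (G_t⁻¹ G_t')` is the analogue
of `F(t)` for the span. Spans of initial segments of a dense sequence exhaust the space; their
kernels converge pointwise to `K_t` and are dominated by `K_t` on the diagonal. Hadamard's
inequality turns this into a summable bound on the Fredholm series, so both sides pass to the limit.
The integrals converge since `K_t(w, w)` is bounded on the support of `u`, by the mean value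
property.
-/

section Determinant

variable {ι R : Type*} [Fintype ι] [DecidableEq ι] [CommRing R]

lemma sum_det_submatrix_eq_factorial_mul (A : Matrix ι ι R) (m : ℕ) :
    ∑ f : Fin m → ι, (A.submatrix f f).det =
      m.factorial * ∑ s ∈ Finset.univ.powersetCard m,
        (A.submatrix (Subtype.val : s → ι) Subtype.val).det := by
  have sum_enumerations (s : Finset ι) (hs : s ∈ Finset.univ.powersetCard m) :
      ∑ e : Fin m ≃ s, (A.submatrix (fun i => (e i : ι)) fun i => (e i : ι)).det =
        m.factorial * (A.submatrix (Subtype.val : s → ι) Subtype.val).det := by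
    have e₀ : Fin m ≃ s :=
      (Finset.equivFinOfCardEq (Finset.mem_powersetCard.1 hs).2).symm
    have hdet (e : Fin m ≃ s) : (A.submatrix (fun i => (e i : ι)) fun i => (e i : ι)).det =
        (A.submatrix (Subtype.val : s → ι) Subtype.val).det := by
      rw [← Matrix.det_submatrix_equiv_self e, Matrix.submatrix_submatrix]
      rfl
    simp only [hdet, Finset.sum_const, Finset.card_univ, Fintype.card_equiv e₀, Fintype.card_fin,
      nsmul_eq_mul]
  rw [Finset.mul_sum, ← Finset.sum_congr rfl sum_enumerations, Finset.sum_sigma']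
  symm
  refine Finset.sum_of_injOn (fun e i => (e.2 i : ι)) ?_ (fun _ _ => Finset.mem_coe.2
    (Finset.mem_univ _)) ?_ (fun _ _ => rfl)
  · rintro ⟨s, e⟩ - ⟨s', e'⟩ - h
    have hfun (i : Fin m) : (e i : ι) = e' i := congrFun h i
    obtain rfl : s = s' := by
      ext x
      constructor
      · intro hx
        simpa [← hfun] using (e' (e.symm ⟨x, hx⟩)).2
      · intro hx
        simpa [hfun] using (e (e'.symm ⟨x, hx⟩)).2
    obtain rfl : e = e' := Equiv.ext fun i => Subtype.ext (hfun i)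
    rfl
  · intro f _ hf
    have hninj : ¬ Function.Injective f := fun hinj => hf
      ⟨⟨Finset.univ.image f, (Equiv.ofInjective f hinj).trans
        (Equiv.subtypeEquivRight fun x => by simp)⟩,
        by simp [Finset.mem_powersetCard, Finset.card_image_of_injective _ hinj], rfl⟩
    obtain ⟨i, j, hij, hne⟩ := Function.not_injective_iff.1 hninj
    refine Matrix.det_zero_of_row_eq hne (funext fun l => ?_)
    simp only [Matrix.submatrix_apply, hij]

lemma tsum_inv_factorial_smul_sum_det_submatrix (A : Matrix ι ι ℂ) :
    ∑' m : ℕ, (m.factorial : ℝ)⁻¹ • ∑ f : Fin m → ι, (A.submatrix f f).det = (1 + A).det := by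
  set p := Matrix.det (1 + (Polynomial.X : Polynomial ℂ) • A.map Polynomial.C) with hp
  have hcoeff (m : ℕ) :
      (m.factorial : ℝ)⁻¹ • ∑ f : Fin m → ι, (A.submatrix f f).det = p.coeff m := by
    rw [sum_det_submatrix_eq_factorial_mul, hp, Matrix.coeff_det_one_add_X_smul_eq_sum_minors,
      Complex.real_smul, ← mul_assoc, ofReal_inv, ofReal_natCast,
      inv_mul_cancel₀ (Nat.cast_ne_zero.2 m.factorial_ne_zero), one_mul]
  have heval : p.eval 1 = (1 + A).det := by
    rw [hp, ← Polynomial.coe_evalRingHom, RingHom.map_det]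
    congr 1
    ext i j
    by_cases hij : i = j <;> simp [hij]
  simp only [hcoeff]
  rw [← heval, Polynomial.eval_eq_sum_range, tsum_eq_sum (s := Finset.range (p.natDegree + 1))]
  · simp only [one_pow, mul_one]
  · intro m hm
    exact Polynomial.coeff_eq_zero_of_natDegree_lt (by simpa using hm)

lemma hasDerivAt_det {𝕜 𝔸 : Type*} [NontriviallyNormedField 𝕜] [NormedCommRing 𝔸]
    [NormedAlgebra 𝕜 𝔸] {A : 𝕜 → Matrix ι ι 𝔸} {A' : Matrix ι ι 𝔸} {t : 𝕜}
    (hA : ∀ i j, HasDerivAt (fun s => A s i j) (A' i j) t) :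
    HasDerivAt (fun s => (A s).det) ((A t).adjugate * A').trace t := by
  have hcol (i : ι) : ((A t).adjugate * A') i i =
      ∑ σ : Equiv.Perm ι, (Equiv.Perm.sign σ : 𝔸) *
        ((∏ j ∈ Finset.univ.erase i, A t (σ j) j) * A' (σ i) i) := by
    have hcramer : ((A t).adjugate * A') i i = ((A t).updateCol i fun j => A' j i).det := by
      rw [← Matrix.cramer_apply, Matrix.cramer_eq_adjugate_mulVec]
      rfl
    rw [hcramer, Matrix.det_apply']
    refine Finset.sum_congr rfl fun σ _ => ?_
    rw [← Finset.prod_erase_mul _ _ (Finset.mem_univ i), Matrix.updateCol_self]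
    congr 2
    exact Finset.prod_congr rfl fun j hj => by rw [Matrix.updateCol_ne (Finset.ne_of_mem_erase hj)]
  simp only [Matrix.det_apply']
  refine (HasDerivAt.fun_sum fun σ _ =>
    (HasDerivAt.fun_finsetProd fun i _ => hA (σ i) i).const_mul _).congr_deriv ?_
  simp only [Matrix.trace, Matrix.diag, hcol, Finset.mul_sum, smul_eq_mul]
  exact Finset.sum_comm

end Determinant

section Hadamard

variable {ι : Type*} [Fintype ι] [DecidableEq ι]

lemma norm_det_le_one_of_posSemidef {A : Matrix ι ι ℂ} (hA : A.PosSemidef)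
    (hdiag : ∀ i, A i i = 1) : ‖A.det‖ ≤ 1 := by
  have hsum : ∑ i, hA.1.eigenvalues i = ∑ _i : ι, (1 : ℝ) := by
    have htrace := hA.1.trace_eq_sum_eigenvalues
    simp only [Matrix.trace, Matrix.diag, hdiag, Complex.coe_algebraMap] at htrace
    exact_mod_cast htrace.symm
  calc ‖A.det‖ = ∏ i, hA.1.eigenvalues i := by
        rw [hA.1.det_eq_prod_eigenvalues, norm_prod]
        exact Finset.prod_congr rfl fun i _ => by
          rw [RCLike.norm_ofReal, abs_of_nonneg (hA.eigenvalues_nonneg i)]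
    _ ≤ ∏ i, Real.exp (hA.1.eigenvalues i - 1) := by
        refine Finset.prod_le_prod (fun i _ => hA.eigenvalues_nonneg i) fun i _ => ?_
        simpa using Real.add_one_le_exp (hA.1.eigenvalues i - 1)
    _ = 1 := by rw [← Real.exp_sum, Finset.sum_sub_distrib, hsum, sub_self, Real.exp_zero]

-- Conjugating by the inverse square roots of the diagonal entries normalizes the diagonal to one.
lemma norm_det_le_prod_norm_diag {A : Matrix ι ι ℂ} (hA : A.PosSemidef) :
    ‖A.det‖ ≤ ∏ i, ‖A i i‖ := by
  rcases eq_or_ne A.det 0 with hdet | hdet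
  · rw [hdet, norm_zero]
    exact Finset.prod_nonneg fun i _ => norm_nonneg _
  have hpos (i : ι) : 0 < A i i := (hA.posDef_iff_det_ne_zero.2 hdet).diag_pos
  have hsqrt (i : ι) : 0 < √‖A i i‖ := Real.sqrt_pos.2 (norm_pos_iff.2 (hpos i).ne')
  set D : Matrix ι ι ℂ := Matrix.diagonal fun i => ((√‖A i i‖)⁻¹ : ℝ) with hD
  have hDstar : D.conjTranspose = D := by
    rw [hD, Matrix.diagonal_conjTranspose]
    congr 1
    ext i
    exact Complex.conj_ofReal _
  have hscaled : ‖(D * A * D).det‖ ≤ 1 := by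
    refine norm_det_le_one_of_posSemidef ?_ fun i => ?_
    · simpa only [hDstar] using hA.mul_mul_conjTranspose_same D
    · have hscale : (√‖A i i‖)⁻¹ * ‖A i i‖ * (√‖A i i‖)⁻¹ = 1 := by
        nth_rewrite 2 [← Real.mul_self_sqrt (norm_nonneg (A i i))]
        rw [inv_mul_cancel_left₀ (hsqrt i).ne', mul_inv_cancel₀ (hsqrt i).ne']
      have hentry : (D * A * D) i i = ((√‖A i i‖)⁻¹ : ℝ) * A i i * ((√‖A i i‖)⁻¹ : ℝ) := by
        rw [hD, Matrix.mul_diagonal, Matrix.diagonal_mul]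
      rw [hentry, (Complex.eq_coe_norm_of_nonneg (hpos i).le : A i i = ‖A i i‖)]
      simpa using congrArg ((↑) : ℝ → ℂ) hscale
  have hDdet : ‖D.det‖ ^ 2 = (∏ i, ‖A i i‖)⁻¹ := by
    rw [hD, Matrix.det_diagonal, norm_prod, ← Finset.prod_pow, ← Finset.prod_inv_distrib]
    refine Finset.prod_congr rfl fun i _ => ?_
    rw [Complex.norm_real, Real.norm_of_nonneg (inv_nonneg.2 (hsqrt i).le), inv_pow,
      Real.sq_sqrt (norm_nonneg _)]
  have hprod : 0 < ∏ i, ‖A i i‖ := Finset.prod_pos fun i _ => norm_pos_iff.2 (hpos i).ne'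
  rw [Matrix.det_mul, Matrix.det_mul, norm_mul, norm_mul, mul_right_comm, ← sq, hDdet,
    inv_mul_le_iff₀ hprod, mul_one] at hscaled
  exact hscaled

end Hadamard

section GramProjection

variable {ι 𝕜 E : Type*} [RCLike 𝕜] [NormedAddCommGroup E] [InnerProductSpace 𝕜 E]

instance finiteDimensional_span_range [Finite ι] (b : ι → E) :
    FiniteDimensional 𝕜 (Submodule.span 𝕜 (Set.range b)) :=
  FiniteDimensional.span_of_finite 𝕜 (Set.finite_range b)

lemma starProjection_span_range_apply [Fintype ι] [DecidableEq ι] {b : ι → E}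
    (hb : LinearIndependent 𝕜 b) (x : E) :
    (Submodule.span 𝕜 (Set.range b)).starProjection x =
      ∑ i, (∑ j, (Matrix.gram 𝕜 b)⁻¹ i j * inner 𝕜 (b j) x) • b i := by
  set c : ι → 𝕜 := (Matrix.gram 𝕜 b)⁻¹.mulVec fun j => inner 𝕜 (b j) x with hc
  have hgram : (Matrix.gram 𝕜 b).mulVec c = fun j => inner 𝕜 (b j) x := by
    rw [hc, Matrix.mulVec_mulVec, Matrix.mul_nonsing_inv _
      (Matrix.det_gram_ne_zero_iff_linearIndependent.2 hb).isUnit, Matrix.one_mulVec]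
  refine Submodule.eq_starProjection_of_mem_orthogonal
    (Submodule.sum_mem _ fun i _ => Submodule.smul_mem _ _ (Submodule.subset_span ⟨i, rfl⟩)) ?_
  rw [Submodule.mem_orthogonal]
  intro y hy
  induction hy using Submodule.span_induction with
  | mem y hy =>
    obtain ⟨j, rfl⟩ := hy
    have hj := congrFun hgram j
    simp only [Matrix.mulVec, dotProduct, Matrix.gram_apply, hc] at hj
    simp only [inner_sub_right, inner_sum, inner_smul_right, ← hj, sub_eq_zero, mul_comm]
  | zero => exact inner_zero_left _
  | add y z _ _ hy hz => rw [inner_add_left, hy, hz, add_zero]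
  | smul c y _ hy => rw [inner_smul_left, hy, mul_zero]

lemma norm_sub_starProjection_le {U : Submodule 𝕜 E} [U.HasOrthogonalProjection] (x : E) {y : E}
    (hy : y ∈ U) : ‖x - U.starProjection x‖ ≤ ‖x - y‖ := by
  rw [Submodule.starProjection_minimal]
  exact ciInf_le ⟨0, Set.forall_mem_range.2 fun _ => norm_nonneg _⟩ (⟨y, hy⟩ : U)

end GramProjection

section Fredholm

variable {α : Type*} [MeasurableSpace α]

/-- The Fredholm determinant `det (1 + K a)` of the integral operator with kernel `K(z, w) a(w)`
on `L²(ν)`, defined by its Fredholm series. -/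
def fredholmDet (ν : Measure α) (K : α → α → ℂ) (a : α → ℂ) : ℂ :=
  ∑' m : ℕ, (m.factorial : ℝ)⁻¹ • ∫ z : Fin m → α,
    (Matrix.of fun i j => K (z i) (z j)).det * ∏ l, a (z l) ∂Measure.pi fun _ => ν

lemma det_sum_mul_prod_eq_sum_perm {ι κ β R : Type*} [Fintype ι] [Fintype κ] [DecidableEq κ]
    [CommRing R] (p q : ι → β → R) (a : β → R) (z : κ → β) :
    (Matrix.of fun i j => ∑ k, p k (z i) * q k (z j)).det * ∏ l, a (z l) =
      ∑ f : κ → ι, ∑ σ : Equiv.Perm κ,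
        (Equiv.Perm.sign σ : R) * ∏ i, (q (f i) (z i) * p (f (σ⁻¹ i)) (z i) * a (z i)) := by
  rw [Matrix.det_apply', Finset.sum_comm, Finset.sum_mul]
  refine Finset.sum_congr rfl fun σ _ => ?_
  simp only [Matrix.of_apply, Finset.prod_univ_sum, Fintype.piFinset_univ, Finset.prod_mul_distrib,
    mul_assoc, Finset.sum_mul, Finset.mul_sum]
  refine Finset.sum_congr rfl fun f _ => ?_
  have hreindex : ∏ i, p (f i) (z (σ i)) = ∏ i, p (f (σ⁻¹ i)) (z i) := by
    rw [← Equiv.prod_comp σ fun i => p (f (σ⁻¹ i)) (z i)]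
    simp only [Equiv.Perm.coe_inv, Equiv.symm_apply_apply]
  rw [hreindex, mul_left_comm (∏ i, p (f (σ⁻¹ i)) (z i))]

lemma norm_det_mul_prod_le {β κ : Type*} [Fintype κ] [DecidableEq κ] {K : β → β → ℂ} {a : β → ℂ}
    {g : β → ℝ} {z : κ → β} (hpsd : (Matrix.of fun i j => K (z i) (z j)).PosSemidef)
    (hbound : ∀ i, ‖K (z i) (z i) * a (z i)‖ ≤ g (z i)) :
    ‖(Matrix.of fun i j => K (z i) (z j)).det * ∏ l, a (z l)‖ ≤ ∏ l, g (z l) :=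
  calc ‖(Matrix.of fun i j => K (z i) (z j)).det * ∏ l, a (z l)‖
      ≤ (∏ i, ‖K (z i) (z i)‖) * ∏ l, ‖a (z l)‖ := by
        rw [norm_mul, norm_prod]
        gcongr
        exact norm_det_le_prod_norm_diag hpsd
    _ ≤ ∏ l, g (z l) := by
        rw [← Finset.prod_mul_distrib]
        exact Finset.prod_le_prod (fun i _ => by positivity) fun i _ => by
          simpa only [norm_mul] using hbound i

section FiniteRank

variable {ν : Measure α} [SigmaFinite ν] {ι : Type*}
  {p q : ι → α → ℂ} {a : α → ℂ}

lemma integrable_prod_perm {κ : Type*} [Fintype κ]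
    (hint : ∀ i j, Integrable (fun z => q i z * p j z * a z) ν) (f : κ → ι)
    (σ : Equiv.Perm κ) :
    Integrable (fun z : κ → α => ∏ i, (q (f i) (z i) * p (f (σ⁻¹ i)) (z i) * a (z i)))
      (Measure.pi fun _ => ν) :=
  Integrable.fintype_prod (f := fun i z => q (f i) z * p (f (σ⁻¹ i)) z * a z)
    fun i => hint (f i) (f (σ⁻¹ i))

variable [Fintype ι]

lemma integrable_det_sum_mul_prod (hint : ∀ i j, Integrable (fun z => q i z * p j z * a z) ν)
    (m : ℕ) :
    Integrable (fun z : Fin m → α =>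
      (Matrix.of fun i j => ∑ k, p k (z i) * q k (z j)).det * ∏ l, a (z l))
      (Measure.pi fun _ => ν) := by
  classical
  simp only [det_sum_mul_prod_eq_sum_perm p q a]
  exact integrable_finsetSum _ fun f _ => integrable_finsetSum _ fun σ _ =>
    (integrable_prod_perm hint f σ).const_mul _

lemma integral_det_sum_mul_prod (hint : ∀ i j, Integrable (fun z => q i z * p j z * a z) ν)
    (m : ℕ) :
    ∫ z : Fin m → α, (Matrix.of fun i j => ∑ k, p k (z i) * q k (z j)).det * ∏ l, a (z l)
        ∂Measure.pi (fun _ => ν) =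
      ∑ f : Fin m → ι, ((Matrix.of fun i j => ∫ z, q i z * p j z * a z ∂ν).submatrix f f).det := by
  classical
  have hintegrable (f : Fin m → ι) (σ : Equiv.Perm (Fin m)) :=
    (integrable_prod_perm hint f σ).const_mul (Equiv.Perm.sign σ : ℂ)
  simp only [det_sum_mul_prod_eq_sum_perm p q a]
  rw [integral_finsetSum _ fun f _ => integrable_finsetSum _ fun σ _ => hintegrable f σ]
  refine Finset.sum_congr rfl fun f _ => ?_
  rw [integral_finsetSum _ fun σ _ => hintegrable f σ, Matrix.det_apply']
  refine Finset.sum_congr rfl fun σ _ => ?_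
  rw [integral_const_mul, integral_fintype_prod_eq_prod
    (fun i z => q (f i) z * p (f (σ⁻¹ i)) z * a z), ← Equiv.prod_comp σ]
  simp only [Equiv.Perm.coe_inv, Equiv.symm_apply_apply, Matrix.submatrix_apply, Matrix.of_apply]

lemma fredholmDet_sum_mul [DecidableEq ι]
    (hint : ∀ i j, Integrable (fun z => q i z * p j z * a z) ν) :
    fredholmDet ν (fun z w => ∑ k, p k z * q k w) a =
      (1 + Matrix.of fun i j => ∫ z, q i z * p j z * a z ∂ν).det := by
  simp only [fredholmDet, integral_det_sum_mul_prod hint,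
    tsum_inv_factorial_smul_sum_det_submatrix]

end FiniteRank

section Convergence

variable {ν : Measure α} [SigmaFinite ν] {E : Set α} {K : α → α → ℂ} {KN : ℕ → α → α → ℂ}
  {a : α → ℂ} {g : α → ℝ}

lemma ae_pi_forall_mem (hE : ∀ᵐ z ∂ν, z ∈ E) (m : ℕ) :
    ∀ᵐ z : Fin m → α ∂Measure.pi (fun _ => ν), ∀ i, z i ∈ E :=
  ae_all_iff.2 fun _ => Measure.tendsto_eval_ae_ae.eventually hE

lemma tendsto_fredholmDet (hE : ∀ᵐ z ∂ν, z ∈ E)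
    (hmeas : ∀ N m, AEStronglyMeasurable (fun z : Fin m → α =>
      (Matrix.of fun i j => KN N (z i) (z j)).det * ∏ l, a (z l)) (Measure.pi fun _ => ν))
    (hpsd : ∀ N m (z : Fin m → α), (∀ i, z i ∈ E) →
      (Matrix.of fun i j => KN N (z i) (z j)).PosSemidef)
    (hg : Integrable g ν) (hbound : ∀ N, ∀ z ∈ E, ‖KN N z z * a z‖ ≤ g z)
    (hlim : ∀ z ∈ E, ∀ w ∈ E, Tendsto (fun N => KN N z w) atTop (𝓝 (K z w))) :
    Tendsto (fun N => fredholmDet ν (KN N) a) atTop (𝓝 (fredholmDet ν K a)) := by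
  have hterm_bound (N m : ℕ) : ∀ᵐ z : Fin m → α ∂Measure.pi fun _ => ν,
      ‖(Matrix.of fun i j => KN N (z i) (z j)).det * ∏ l, a (z l)‖ ≤ ∏ l, g (z l) := by
    filter_upwards [ae_pi_forall_mem hE m] with z hz
    exact norm_det_mul_prod_le (hpsd N m z hz) fun i => hbound N _ (hz i)
  have hg_prod (m : ℕ) : Integrable (fun z : Fin m → α => ∏ l, g (z l)) (Measure.pi fun _ => ν) :=
    Integrable.fintype_prod fun _ => hg
  refine tendsto_tsum_of_dominated_convergence (Real.summable_pow_div_factorial (∫ z, g z ∂ν))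
    (fun m => ?_) (Eventually.of_forall fun N m => ?_)
  · refine (tendsto_integral_of_dominated_convergence _ (hmeas · m) (hg_prod m)
      (hterm_bound · m) ?_).const_smul _
    filter_upwards [ae_pi_forall_mem hE m] with z hz
    refine Tendsto.mul_const _ ?_
    have hmatrix : Tendsto (fun N => Matrix.of fun i j => KN N (z i) (z j)) atTop
        (𝓝 (Matrix.of fun i j => K (z i) (z j))) :=
      tendsto_pi_nhds.2 fun i => tendsto_pi_nhds.2 fun j => hlim _ (hz i) _ (hz j)
    exact (Continuous.matrix_det continuous_id).continuousAt.tendsto.comp hmatrix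
  · rw [norm_smul, norm_inv, Real.norm_natCast, div_eq_inv_mul]
    gcongr
    refine (norm_integral_le_of_norm_le (hg_prod m) (hterm_bound N m)).trans_eq ?_
    rw [integral_fintype_prod_eq_prod fun _ : Fin m => g, Finset.prod_const, Finset.card_univ,
      Fintype.card_fin]

end Convergence

end Fredholm

/-- A complex vector space of functions that are square integrable against `e^{-ψ} ν`, together
with a bounded direction `v` in which the weight is varied. As `|v| ≤ M`, the members are square
integrable against every `e^{-(ψ + t v)} ν`; so `Ω`, holomorphy and the topology of the Bergman
space play no role in this part of the argument. -/
structure WeightedSpace {α : Type*} [MeasurableSpace α] (ν : Measure α) where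
  ψ : α → ℝ
  v : α → ℝ
  M : NNReal
  space : Submodule ℂ (α → ℂ)
  aemeasurable_v : AEMeasurable v ν
  abs_v_le : ∀ z, |v z| ≤ M
  memLp : ∀ f ∈ space, MemLp (fun z => Real.exp (-ψ z / 2) • f z) 2 ν

namespace WeightedSpace

variable {α : Type*} [MeasurableSpace α] {ν : Measure α} (B : WeightedSpace ν)

section Embedding

/-- The density `e^{-(ψ + t v)}`. -/
def weight (t : ℝ) (z : α) : ℝ := Real.exp (-(B.ψ z + t * B.v z))

lemma weight_pos (t : ℝ) (z : α) : 0 < B.weight t z := Real.exp_pos _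

lemma exp_half_le (s t : ℝ) (z : α) : Real.exp (-(B.ψ z + s * B.v z) / 2) ≤
    Real.exp (B.M * |s - t| / 2) * Real.exp (-(B.ψ z + t * B.v z) / 2) := by
  rw [← Real.exp_add, Real.exp_le_exp]
  have hv : |(s - t) * B.v z| ≤ B.M * |s - t| := by
    rw [abs_mul, mul_comm]
    exact mul_le_mul_of_nonneg_right (B.abs_v_le z) (abs_nonneg _)
  linarith [(abs_le.1 hv).1]

lemma exp_half_mul_self (t : ℝ) (z : α) : Real.exp (-(B.ψ z + t * B.v z) / 2) *
    Real.exp (-(B.ψ z + t * B.v z) / 2) = B.weight t z := by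
  rw [weight, ← Real.exp_add, add_halves]

lemma weight_le (s t : ℝ) (z : α) :
    B.weight s z ≤ Real.exp (B.M * |s - t|) * B.weight t z := by
  have h := B.exp_half_le s t z
  calc B.weight s z ≤ (Real.exp (B.M * |s - t| / 2) * Real.exp (-(B.ψ z + t * B.v z) / 2)) *
        (Real.exp (B.M * |s - t| / 2) * Real.exp (-(B.ψ z + t * B.v z) / 2)) := by
        rw [← exp_half_mul_self]
        gcongr
    _ = Real.exp (B.M * |s - t|) * B.weight t z := by
        rw [mul_mul_mul_comm, exp_half_mul_self, ← Real.exp_add, add_halves]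

lemma memLp_exp_smul {f : α → ℂ} (hf : f ∈ B.space) (t : ℝ) :
    MemLp (fun z => Real.exp (-(B.ψ z + t * B.v z) / 2) • f z) 2 ν := by
  have hfactor : (fun z => Real.exp (-(B.ψ z + t * B.v z) / 2) • f z) =
      fun z => Real.exp (-(t * B.v z) / 2) • (Real.exp (-B.ψ z / 2) • f z) := by
    funext z
    rw [smul_smul, ← Real.exp_add]
    congr 2
    ring
  refine (B.memLp f hf).of_le_mul (c := Real.exp (B.M * |t - 0| / 2)) ?_
    (Eventually.of_forall fun z => ?_)
  · rw [hfactor]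
    exact (Real.measurable_exp.comp_aemeasurable
      ((B.aemeasurable_v.const_mul t).neg.div_const 2)).aestronglyMeasurable.smul
      (B.memLp f hf).aestronglyMeasurable
  · simp only [norm_smul, Real.norm_of_nonneg (Real.exp_pos _).le, ← mul_assoc]
    gcongr
    simpa only [zero_mul, add_zero] using B.exp_half_le t 0 z

/-- The isometric copy `f ↦ e^{-(ψ + t v)/2} f` in `L²(ν)` of the space with weight
`e^{-(ψ + t v)}`. -/
def embed (t : ℝ) : B.space →ₗ[ℂ] Lp ℂ 2 ν where
  toFun f := (B.memLp_exp_smul f.2 t).toLp _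
  map_add' f g := by
    rw [← MemLp.toLp_add, MemLp.toLp_eq_toLp_iff]
    exact Eventually.of_forall fun z => smul_add _ _ _
  map_smul' c f := by
    rw [RingHom.id_apply, ← MemLp.toLp_const_smul, MemLp.toLp_eq_toLp_iff]
    exact Eventually.of_forall fun z => smul_comm _ c _

lemma coeFn_embed (t : ℝ) (f : B.space) : B.embed t f =ᵐ[ν]
    fun z => Real.exp (-(B.ψ z + t * B.v z) / 2) • (f : α → ℂ) z :=
  (B.memLp_exp_smul f.2 t).coeFn_toLp

lemma inner_embed_ae (t : ℝ) (f g : B.space) :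
    (fun z => inner ℂ (B.embed t f z) (B.embed t g z)) =ᵐ[ν]
      fun z => (starRingEnd ℂ) ((f : α → ℂ) z) * (g : α → ℂ) z * B.weight t z := by
  filter_upwards [B.coeFn_embed t f, B.coeFn_embed t g] with z hf hg
  rw [hf, hg, RCLike.inner_apply, ← exp_half_mul_self]
  simp only [real_smul, map_mul, conj_ofReal, ofReal_mul]
  ring

lemma integrable_conj_mul_mul_weight (t : ℝ) (f g : B.space) :
    Integrable (fun z => (starRingEnd ℂ) ((f : α → ℂ) z) * (g : α → ℂ) z * B.weight t z) ν :=
  (L2.integrable_inner _ _).congr (B.inner_embed_ae t f g)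

lemma inner_embed (t : ℝ) (f g : B.space) : inner ℂ (B.embed t f) (B.embed t g) =
    ∫ z, (starRingEnd ℂ) ((f : α → ℂ) z) * (g : α → ℂ) z * B.weight t z ∂ν := by
  rw [L2.inner_def]
  exact integral_congr_ae (B.inner_embed_ae t f g)

lemma norm_embed_le (s t : ℝ) (f : B.space) :
    ‖B.embed s f‖ ≤ Real.exp (B.M * |s - t| / 2) * ‖B.embed t f‖ := by
  refine Lp.norm_le_mul_norm_of_ae_le_mul ?_
  filter_upwards [B.coeFn_embed s f, B.coeFn_embed t f] with z hs ht
  rw [hs, ht, norm_smul, norm_smul, Real.norm_of_nonneg (Real.exp_pos _).le,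
    Real.norm_of_nonneg (Real.exp_pos _).le, ← mul_assoc]
  gcongr
  exact B.exp_half_le s t z

end Embedding

section Approximation

lemma embed_eq_zero_of_embed_eq_zero {s : ℝ} (t : ℝ) {f : B.space} (hf : B.embed s f = 0) :
    B.embed t f = 0 := by
  simpa [hf] using B.norm_embed_le t s f

variable {ι : Type*} {b : ι → B.space} {s : ℝ}

lemma linearIndependent_embed (hb : LinearIndependent ℂ fun i => B.embed s (b i)) (t : ℝ) :
    LinearIndependent ℂ fun i => B.embed t (b i) := by
  have himage (r : ℝ) (c : ι →₀ ℂ) : Finsupp.linearCombination ℂ (fun i => B.embed r (b i)) c =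
      B.embed r (Finsupp.linearCombination ℂ b c) :=
    (Finsupp.apply_linearCombination ℂ (B.embed r) b c).symm
  rw [linearIndependent_iff] at hb ⊢
  simp only [himage] at hb ⊢
  exact fun c hc => hb c (B.embed_eq_zero_of_embed_eq_zero s hc)

lemma embed_mem_span_range {f : B.space}
    (hf : B.embed s f ∈ Submodule.span ℂ (Set.range fun i => B.embed s (b i))) (t : ℝ) :
    B.embed t f ∈ Submodule.span ℂ (Set.range fun i => B.embed t (b i)) := by
  have himage (r : ℝ) : Submodule.span ℂ (Set.range fun i => B.embed r (b i)) =
      (Submodule.span ℂ (Set.range b)).map (B.embed r) := by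
    rw [Submodule.map_span, ← Set.range_comp]
    rfl
  rw [himage, Submodule.mem_map] at hf ⊢
  obtain ⟨g, hg, hgf⟩ := hf
  refine ⟨g, hg, ?_⟩
  rw [← sub_eq_zero, ← map_sub] at hgf ⊢
  exact B.embed_eq_zero_of_embed_eq_zero t hgf

lemma exists_basis_of_finite [Finite ι] (f : ι → B.space) :
    ∃ (d : ℕ) (b : Fin d → B.space), ∀ t,
      LinearIndependent ℂ (fun j => B.embed t (b j)) ∧
        ∀ i, B.embed t (f i) ∈ Submodule.span ℂ (Set.range fun j => B.embed t (b j)) := by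
  obtain ⟨e, he_mem, he_span, he_indep⟩ :=
    Submodule.exists_fun_fin_finrank_span_eq ℂ (Set.range fun i => B.embed 0 (f i))
  choose c hc using he_mem
  obtain rfl : e = fun j => B.embed 0 (f (c j)) := funext fun j => (hc j).symm
  refine ⟨_, fun j => f (c j), fun t => ⟨B.linearIndependent_embed he_indep t, fun i =>
    B.embed_mem_span_range (s := 0) ?_ t⟩⟩
  rw [he_span]
  exact Submodule.subset_span ⟨i, rfl⟩

lemma exists_dense_seq [SigmaFinite ν] [MeasurableSpace.CountablyGenerated α] :
    ∃ f : ℕ → B.space, ∀ (t : ℝ) (g : B.space), ∀ ε > 0, ∃ i,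
      ‖B.embed t (g - f i)‖ < ε := by
  have : Fact ((2 : ℝ≥0∞) ≠ ⊤) := ⟨ENNReal.ofNat_ne_top⟩
  obtain ⟨y, hy⟩ := TopologicalSpace.exists_dense_seq (LinearMap.range (B.embed 0))
  choose f hf using fun i => (y i).2
  refine ⟨f, fun t g ε hε => ?_⟩
  have hC : 0 < Real.exp (B.M * |t - 0| / 2) := Real.exp_pos _
  obtain ⟨i, hi⟩ := Metric.denseRange_iff.1 hy ⟨B.embed 0 g, g, rfl⟩ _ (div_pos hε hC)
  refine ⟨i, (B.norm_embed_le t 0 _).trans_lt ?_⟩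
  rwa [Subtype.dist_eq, dist_eq_norm, ← hf, ← map_sub, lt_div_iff₀' hC] at hi

lemma exists_approximation [SigmaFinite ν] [MeasurableSpace.CountablyGenerated α] :
    ∃ (d : ℕ → ℕ) (b : ∀ N, Fin (d N) → B.space),
      (∀ N t, LinearIndependent ℂ fun i => B.embed t (b N i)) ∧
      ∀ t (g : B.space), Tendsto (fun N => (Submodule.span ℂ
        (Set.range fun i => B.embed t (b N i))).starProjection (B.embed t g)) atTop
        (𝓝 (B.embed t g)) := by
  obtain ⟨f, hf⟩ := B.exists_dense_seq
  choose d b hb using fun N : ℕ => B.exists_basis_of_finite fun i : Fin N => f i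
  refine ⟨d, b, fun N t => (hb N t).1, fun t g => Metric.tendsto_atTop.2 fun ε hε => ?_⟩
  obtain ⟨i, hi⟩ := hf t g ε hε
  refine ⟨i + 1, fun N hN => ?_⟩
  rw [dist_comm, dist_eq_norm]
  rw [map_sub] at hi
  exact (norm_sub_starProjection_le _ ((hb N t).2 ⟨i, hN⟩)).trans_lt hi

end Approximation

section Derivative

variable {t : ℝ}

lemma hasDerivAt_weight (t : ℝ) (z : α) :
    HasDerivAt (fun s => B.weight s z) (-B.v z * B.weight t z) t := by
  have h := (((hasDerivAt_id t).mul_const (B.v z)).const_add (B.ψ z)).fun_neg.exp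
  exact h.congr_deriv (by simp only [weight, id]; ring)

lemma weight_le_of_abs_sub_le_one {s : ℝ} (hst : |s - t| ≤ 1) (z : α) :
    B.weight s z ≤ Real.exp B.M * B.weight t z := by
  refine (B.weight_le s t z).trans (mul_le_mul_of_nonneg_right ?_ (B.weight_pos t z).le)
  exact Real.exp_le_exp.2 (mul_le_of_le_one_right B.M.2 hst)

lemma abs_v_mul_weight_le {s : ℝ} (hst : |s - t| ≤ 1) (z : α) :
    |B.v z| * B.weight s z ≤ B.M * (Real.exp B.M * B.weight t z) :=
  mul_le_mul (B.abs_v_le z) (B.weight_le_of_abs_sub_le_one hst z) (B.weight_pos s z).le B.M.2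

lemma abs_weight_sub_le {s : ℝ} (hst : |s - t| ≤ 1) (z : α) :
    |B.weight s z - B.weight t z| ≤ Real.exp B.M * (|B.v z| * B.weight t z) := by
  have hderiv (r : ℝ) (hr : r ∈ Metric.closedBall t 1) :
      ‖-B.v z * B.weight r z‖ ≤ Real.exp B.M * (|B.v z| * B.weight t z) := by
    rw [norm_mul, norm_neg, Real.norm_eq_abs, Real.norm_of_nonneg (B.weight_pos r z).le,
      mul_left_comm]
    gcongr
    exact B.weight_le_of_abs_sub_le_one hr z
  refine ((convex_closedBall t 1).norm_image_sub_le_of_norm_hasDerivWithin_le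
    (fun r _ => (B.hasDerivAt_weight r z).hasDerivWithinAt) hderiv
    (Metric.mem_closedBall_self zero_le_one) hst).trans (mul_le_of_le_one_right ?_ hst)
  have := (B.weight_pos t z).le
  positivity

lemma hasDerivAt_integral_weight (t : ℝ) (f g : B.space) :
    Integrable (fun z => (starRingEnd ℂ) ((f : α → ℂ) z) * (g : α → ℂ) z *
      (-B.v z * B.weight t z : ℂ)) ν ∧
    HasDerivAt (fun s => ∫ z, (starRingEnd ℂ) ((f : α → ℂ) z) * (g : α → ℂ) z * B.weight s z ∂ν)
      (∫ z, (starRingEnd ℂ) ((f : α → ℂ) z) * (g : α → ℂ) z *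
        (-B.v z * B.weight t z : ℂ) ∂ν) t := by
  set h : α → ℂ := fun z => (starRingEnd ℂ) ((f : α → ℂ) z) * (g : α → ℂ) z
  have hint (s : ℝ) : Integrable (fun z => h z * B.weight s z) ν :=
    B.integrable_conj_mul_mul_weight s f g
  refine hasDerivAt_integral_of_dominated_loc_of_deriv_le (Metric.ball_mem_nhds t one_pos)
    (F' := fun s z => h z * (-B.v z * B.weight s z : ℂ))
    (Eventually.of_forall fun s => (hint s).aestronglyMeasurable) (hint t) ?_
    (bound := fun z => B.M * (Real.exp B.M * ‖h z * B.weight t z‖))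
    (Eventually.of_forall fun z s hs => ?_) (((hint t).norm.const_mul _).const_mul _)
    (Eventually.of_forall fun z s _ => ?_)
  · simp only [mul_left_comm _ (-(B.v _ : ℂ))]
    exact (measurable_ofReal.comp_aemeasurable B.aemeasurable_v).neg.aestronglyMeasurable.mul
      (hint t).aestronglyMeasurable
  · simp only [norm_mul, norm_neg, Complex.norm_real, Real.norm_of_nonneg (B.weight_pos _ z).le,
      Real.norm_eq_abs]
    calc ‖h z‖ * (|B.v z| * B.weight s z) ≤ ‖h z‖ * (B.M * (Real.exp B.M * B.weight t z)) :=
          mul_le_mul_of_nonneg_left (B.abs_v_mul_weight_le (Metric.mem_ball.1 hs).le z)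
            (norm_nonneg _)
      _ = B.M * (Real.exp B.M * (‖h z‖ * B.weight t z)) := by ring
  · simpa only [ofReal_mul, ofReal_neg] using (B.hasDerivAt_weight s z).ofReal_comp.const_mul (h z)

end Derivative

section Gram

/-- The integral `-∫ K(z, z) v(z) e^{-(ψ + t v)(z)} dν(z)`: for the reproducing kernel it is the
logarithmic derivative of the Fredholm determinant at `t`. -/
def firstVariation (t : ℝ) (K : α → α → ℂ) : ℂ :=
  ∫ z, K z z * (-B.v z * B.weight t z : ℂ) ∂ν

variable {ι : Type*} (b : ι → B.space)

/-- The Gram matrix of `b` for the density `a` relative to `ν`. -/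
def gramOf (a : α → ℂ) : Matrix ι ι ℂ :=
  Matrix.of fun i j => ∫ z, (starRingEnd ℂ) ((b i : α → ℂ) z) * (b j : α → ℂ) z * a z ∂ν

/-- The Gram matrix of `b` for the weight `e^{-(ψ + t v)}`. -/
def gram (t : ℝ) : Matrix ι ι ℂ := B.gramOf b fun z => B.weight t z

lemma gram_eq (t : ℝ) : B.gram b t = Matrix.gram ℂ fun i => B.embed t (b i) :=
  Matrix.ext fun i j => (B.inner_embed t (b i) (b j)).symm

variable [Fintype ι] [DecidableEq ι]

/-- The complex conjugates of the basis dual to `b` for the weight `e^{-(ψ + t v)}`. -/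
def conjDual (t : ℝ) (i : ι) (w : α) : ℂ :=
  ∑ j, (B.gram b t)⁻¹ i j * (starRingEnd ℂ) ((b j : α → ℂ) w)

/-- The reproducing kernel of the span of `b` for the weight `e^{-(ψ + t v)}`. -/
def gramKernel (t : ℝ) (z w : α) : ℂ := ∑ i, (b i : α → ℂ) z * B.conjDual b t i w

variable {b} {t : ℝ}

lemma det_gram_pos (hb : LinearIndependent ℂ fun i => B.embed t (b i)) :
    0 < (B.gram b t).det := by
  rw [gram_eq]
  exact (Matrix.posDef_gram_iff_linearIndependent.2 hb).det_pos

section ConjDual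

variable {a : α → ℂ}
  (ha : ∀ i j, Integrable (fun z => (starRingEnd ℂ) ((b i : α → ℂ) z) * (b j : α → ℂ) z * a z) ν)

include ha

lemma integrable_conjDual_mul (i j : ι) :
    Integrable (fun z => B.conjDual b t i z * (b j : α → ℂ) z * a z) ν := by
  simp only [conjDual, Finset.sum_mul, mul_assoc]
  simp only [← mul_assoc ((starRingEnd ℂ) _)]
  exact integrable_finsetSum _ fun l _ => (ha l j).const_mul _

lemma integral_conjDual_mul (i j : ι) :
    ∫ z, B.conjDual b t i z * (b j : α → ℂ) z * a z ∂ν =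
      ((B.gram b t)⁻¹ * B.gramOf b a) i j := by
  simp only [conjDual, Finset.sum_mul, mul_assoc]
  simp only [← mul_assoc ((starRingEnd ℂ) _)]
  rw [integral_finsetSum _ fun l _ => (ha l j).const_mul _]
  simp only [integral_const_mul, Matrix.mul_apply, gramOf, Matrix.of_apply]

lemma integrable_gramKernel_diag_mul : Integrable (fun z => B.gramKernel b t z z * a z) ν := by
  simp only [gramKernel, Finset.sum_mul, mul_comm ((b _ : α → ℂ) _)]
  exact integrable_finsetSum _ fun i _ => B.integrable_conjDual_mul ha i i

lemma integral_gramKernel_diag_mul :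
    ∫ z, B.gramKernel b t z z * a z ∂ν = ((B.gram b t)⁻¹ * B.gramOf b a).trace := by
  simp only [gramKernel, Finset.sum_mul, mul_comm ((b _ : α → ℂ) _)]
  rw [integral_finsetSum _ fun i _ => B.integrable_conjDual_mul ha i i]
  simp only [B.integral_conjDual_mul ha, Matrix.trace, Matrix.diag]

lemma integrable_det_gramKernel_mul_prod (m : ℕ) [SigmaFinite ν] :
    Integrable (fun z : Fin m → α =>
      (Matrix.of fun i j => B.gramKernel b t (z i) (z j)).det * ∏ l, a (z l))
      (Measure.pi fun _ => ν) :=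
  integrable_det_sum_mul_prod (B.integrable_conjDual_mul ha) m

lemma fredholmDet_gramKernel [SigmaFinite ν] :
    fredholmDet ν (B.gramKernel b t) a = (1 + (B.gram b t)⁻¹ * B.gramOf b a).det := by
  have hmatrix : (Matrix.of fun i j => ∫ z, B.conjDual b t i z * (b j : α → ℂ) z * a z ∂ν) =
      (B.gram b t)⁻¹ * B.gramOf b a :=
    Matrix.ext fun i j => B.integral_conjDual_mul ha i j
  rw [← hmatrix, ← fredholmDet_sum_mul (B.integrable_conjDual_mul ha)]
  rfl

end ConjDual

lemma integrable_conj_mul_mul_weight_sub (s : ℝ) (f g : B.space) : Integrable (fun z =>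
    (starRingEnd ℂ) ((f : α → ℂ) z) * (g : α → ℂ) z * (B.weight s z - B.weight t z : ℂ)) ν := by
  simp only [mul_sub]
  exact (B.integrable_conj_mul_mul_weight s f g).sub (B.integrable_conj_mul_mul_weight t f g)

lemma fredholmDet_gramKernel_weight_sub [SigmaFinite ν] (s : ℝ)
    (hb : LinearIndependent ℂ fun i => B.embed t (b i)) :
    fredholmDet ν (B.gramKernel b t) (fun z => B.weight s z - B.weight t z) =
      (B.gram b s).det / (B.gram b t).det := by
  have hdet := (B.det_gram_pos hb).ne'
  have hsub : B.gramOf b (fun z => B.weight s z - B.weight t z) = B.gram b s - B.gram b t := by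
    ext i j
    simp only [gramOf, gram, mul_sub, Matrix.of_apply, Matrix.sub_apply]
    exact integral_sub (B.integrable_conj_mul_mul_weight s _ _)
      (B.integrable_conj_mul_mul_weight t _ _)
  rw [B.fredholmDet_gramKernel fun i j => B.integrable_conj_mul_mul_weight_sub s (b i) (b j), hsub,
    mul_sub, Matrix.nonsing_inv_mul _ hdet.isUnit, add_sub_cancel, Matrix.det_mul,
    Matrix.det_nonsing_inv, Ring.inverse_eq_inv, div_eq_inv_mul]

lemma hasDerivAt_log_det_gram (hb : LinearIndependent ℂ fun i => B.embed t (b i)) :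
    HasDerivAt (fun s => Complex.log (B.gram b s).det)
      (B.firstVariation t (B.gramKernel b t)) t := by
  have hpos := B.det_gram_pos hb
  have hgram (i j : ι) := B.hasDerivAt_integral_weight t (b i) (b j)
  have hlog := (hasDerivAt_det (A := B.gram b)
    (A' := B.gramOf b fun z => -B.v z * B.weight t z) fun i j => (hgram i j).2).clog_real
    (Complex.mem_slitPlane_iff.2 (Or.inl (Complex.pos_iff.1 hpos).1))
  refine hlog.congr_deriv ?_
  rw [firstVariation, B.integral_gramKernel_diag_mul fun i j => (hgram i j).1, Matrix.inv_def,
    Ring.inverse_eq_inv, Matrix.smul_mul, Matrix.trace_smul, smul_eq_mul, div_eq_inv_mul]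

end Gram

end WeightedSpace

namespace WeightedSpace

variable {α : Type*} [MeasurableSpace α] {ν : Measure α} {B : WeightedSpace ν}

section Kernel

/-- `K` reproduces, on the set `E`, the values of the members of the space for the weight
`e^{-(ψ + t v)}`. -/
structure IsReproducingKernel (B : WeightedSpace ν) (E : Set α) (t : ℝ) (K : α → α → ℂ) :
    Prop where
  mem : ∀ w ∈ E, (fun z => K z w) ∈ B.space
  reproduce : ∀ w ∈ E, ∀ f ∈ B.space,
    ∫ z, f z * (starRingEnd ℂ) (K z w) * B.weight t z ∂ν = f w

namespace IsReproducingKernel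

variable {E : Set α} {s t : ℝ} {K L : α → α → ℂ} (hK : B.IsReproducingKernel E t K)
  {z w : α} (hw : w ∈ E)

include hK hw

/-- The function `K(·, w)` as a vector of the L² copy of the space. -/
def kernelVector (hK : B.IsReproducingKernel E t K) (hw : w ∈ E) : Lp ℂ 2 ν :=
  B.embed t ⟨fun z => K z w, hK.mem w hw⟩

lemma inner_kernelVector (f : B.space) :
    inner ℂ (hK.kernelVector hw) (B.embed t f) = (f : α → ℂ) w := by
  rw [kernelVector, inner_embed, ← hK.reproduce w hw f f.2]
  simp only [mul_comm ((starRingEnd ℂ) _)]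

lemma apply_eq_inner (hz : z ∈ E) :
    K z w = inner ℂ (hK.kernelVector hz) (hK.kernelVector hw) :=
  (hK.inner_kernelVector hz ⟨fun z => K z w, hK.mem w hw⟩).symm

lemma norm_apply_self : ‖K w w‖ = ‖hK.kernelVector hw‖ ^ 2 := by
  rw [hK.apply_eq_inner hw hw, inner_self_eq_norm_sq_to_K]
  simp

lemma apply_self_eq_norm : K w w = ‖K w w‖ := by
  rw [hK.norm_apply_self hw, hK.apply_eq_inner hw hw, inner_self_eq_norm_sq_to_K]
  simp

lemma norm_apply_self_le (hL : B.IsReproducingKernel E s L) :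
    ‖L w w‖ ≤ Real.exp (B.M * |s - t|) * ‖K w w‖ := by
  set k := hK.kernelVector hw
  set l := hL.kernelVector hw
  set c := Real.exp (B.M * |s - t| / 2)
  have hc : c ^ 2 = Real.exp (B.M * |s - t|) := by
    rw [← Real.exp_nat_mul, Nat.cast_ofNat, mul_div_cancel₀ _ two_ne_zero]
  have hle : ‖l‖ * ‖l‖ ≤ c * ‖k‖ * ‖l‖ :=
    calc ‖l‖ * ‖l‖ = ‖inner ℂ k (B.embed t ⟨fun z => L z w, hL.mem w hw⟩)‖ := by
          rw [hK.inner_kernelVector hw, hL.norm_apply_self hw, sq]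
      _ ≤ ‖k‖ * ‖B.embed t ⟨fun z => L z w, hL.mem w hw⟩‖ := norm_inner_le_norm _ _
      _ ≤ ‖k‖ * (c * ‖l‖) := by
          have hembed := B.norm_embed_le t s ⟨fun z => L z w, hL.mem w hw⟩
          rw [abs_sub_comm] at hembed
          exact mul_le_mul_of_nonneg_left hembed (norm_nonneg _)
      _ = c * ‖k‖ * ‖l‖ := by ring
  have hnorm : ‖l‖ ≤ c * ‖k‖ := by
    rcases (norm_nonneg l).eq_or_lt with h0 | hpos
    · rw [← h0]
      positivity
    · exact le_of_mul_le_mul_right hle hpos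
  rw [hK.norm_apply_self hw, hL.norm_apply_self hw, ← hc, ← mul_pow]
  gcongr

end IsReproducingKernel

end Kernel

section GramKernel

namespace IsReproducingKernel

variable {E : Set α} {t : ℝ} {K : α → α → ℂ}

section Span

variable {ι : Type*} [Fintype ι] [DecidableEq ι] {b : ι → B.space}
  (hK : B.IsReproducingKernel E t K)
  (hb : LinearIndependent ℂ fun i => B.embed t (b i))

include hK hb

lemma gramKernel_eq_inner {z w : α} (hz : z ∈ E) (hw : w ∈ E) : B.gramKernel b t z w =
    inner ℂ (hK.kernelVector hz) ((Submodule.span ℂ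
      (Set.range fun i => B.embed t (b i))).starProjection (hK.kernelVector hw)) := by
  have hconj (j : ι) : inner ℂ (B.embed t (b j)) (hK.kernelVector hw) =
      (starRingEnd ℂ) ((b j : α → ℂ) w) := by
    rw [← inner_conj_symm, hK.inner_kernelVector hw]
  rw [starProjection_span_range_apply hb, inner_sum]
  simp only [inner_smul_right, hK.inner_kernelVector hz, hconj, ← B.gram_eq, gramKernel, conjDual,
    mul_comm]

lemma gramKernel_eq_inner_starProjection {z w : α} (hz : z ∈ E) (hw : w ∈ E) :
    B.gramKernel b t z w =
      inner ℂ ((Submodule.span ℂ (Set.range fun i => B.embed t (b i))).starProjection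
        (hK.kernelVector hz))
        ((Submodule.span ℂ (Set.range fun i => B.embed t (b i))).starProjection
          (hK.kernelVector hw)) := by
  rw [hK.gramKernel_eq_inner hb hz hw, Submodule.inner_starProjection_left_eq_right,
    Submodule.starProjection_eq_self_iff.2 (Submodule.starProjection_apply_mem _ _)]

lemma posSemidef_gramKernel {κ : Type*} [Finite κ] {z : κ → α} (hz : ∀ i, z i ∈ E) :
    (Matrix.of fun i j => B.gramKernel b t (z i) (z j)).PosSemidef := by
  have hgram : (Matrix.of fun i j => B.gramKernel b t (z i) (z j)) = Matrix.gram ℂ fun i =>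
      (Submodule.span ℂ (Set.range fun i => B.embed t (b i))).starProjection
        (hK.kernelVector (hz i)) :=
    Matrix.ext fun i j => hK.gramKernel_eq_inner_starProjection hb (hz i) (hz j)
  rw [hgram]
  exact Matrix.posSemidef_gram ℂ _

lemma norm_gramKernel_self_le {w : α} (hw : w ∈ E) : ‖B.gramKernel b t w w‖ ≤ ‖K w w‖ := by
  rw [hK.gramKernel_eq_inner hb hw hw, hK.norm_apply_self hw, sq]
  exact (norm_inner_le_norm _ _).trans (by
    gcongr
    exact Submodule.norm_starProjection_apply_le _ _)

end Span

lemma tendsto_gramKernel (hK : B.IsReproducingKernel E t K) {d : ℕ → ℕ}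
    {b : ∀ N, Fin (d N) → B.space}
    (hb : ∀ N, LinearIndependent ℂ fun i => B.embed t (b N i))
    (hlim : ∀ g : B.space, Tendsto (fun N => (Submodule.span ℂ
      (Set.range fun i => B.embed t (b N i))).starProjection (B.embed t g)) atTop
      (𝓝 (B.embed t g))) {z w : α} (hz : z ∈ E) (hw : w ∈ E) :
    Tendsto (fun N => B.gramKernel (b N) t z w) atTop (𝓝 (K z w)) := by
  simp only [hK.gramKernel_eq_inner (hb _) hz hw, hK.apply_eq_inner hw hz]
  exact tendsto_const_nhds.inner (hlim _)

end IsReproducingKernel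

end GramKernel

section FirstVariation

variable {E : Set α} {s t : ℝ} {K L : α → α → ℂ}

lemma norm_mul_neg_v_mul_weight (t : ℝ) (z : α) (c : ℂ) :
    ‖c * (-B.v z * B.weight t z : ℂ)‖ = ‖c‖ * (|B.v z| * B.weight t z) := by
  simp only [norm_mul, norm_neg, Complex.norm_real, Real.norm_eq_abs,
    abs_of_pos (B.weight_pos t z)]

namespace IsReproducingKernel

lemma norm_apply_self_mul_le (hK : B.IsReproducingKernel E t K)
    (hL : B.IsReproducingKernel E s L) (hst : |s - t| ≤ 1) {w : α} (hw : w ∈ E) :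
    ‖L w w‖ * (|B.v w| * B.weight s w) ≤
      Real.exp B.M ^ 2 * (‖K w w‖ * (|B.v w| * B.weight t w)) := by
  have hweight := (B.weight_pos s w).le
  have hkernel : ‖L w w‖ ≤ Real.exp B.M * ‖K w w‖ :=
    (hK.norm_apply_self_le hw hL).trans (mul_le_mul_of_nonneg_right
      (Real.exp_le_exp.2 (mul_le_of_le_one_right B.M.2 hst)) (norm_nonneg _))
  calc ‖L w w‖ * (|B.v w| * B.weight s w)
      ≤ (Real.exp B.M * ‖K w w‖) * (|B.v w| * (Real.exp B.M * B.weight t w)) := by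
        gcongr
        exact B.weight_le_of_abs_sub_le_one hst w
    _ = Real.exp B.M ^ 2 * (‖K w w‖ * (|B.v w| * B.weight t w)) := by ring

lemma firstVariation_eq_ofReal (hK : B.IsReproducingKernel E t K) (hE : ∀ᵐ z ∂ν, z ∈ E) :
    B.firstVariation t K = (∫ z, (K z z).re * (-B.v z * B.weight t z) ∂ν : ℝ) := by
  rw [firstVariation, ← integral_complex_ofReal]
  refine integral_congr_ae (hE.mono fun z hz => ?_)
  have hre : K z z = (K z z).re := by rw [hK.apply_self_eq_norm hz, ofReal_re]
  beta_reduce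
  rw [hre]
  push_cast
  rfl

end IsReproducingKernel

section Gram

variable {ι : Type*} [Fintype ι] [DecidableEq ι]

lemma aestronglyMeasurable_gramKernel_mul (b : ι → B.space) (t : ℝ) : AEStronglyMeasurable
    (fun z => B.gramKernel b t z z * (-B.v z * B.weight t z : ℂ)) ν :=
  (B.integrable_gramKernel_diag_mul fun i j =>
    (B.hasDerivAt_integral_weight t (b i) (b j)).1).aestronglyMeasurable

lemma aestronglyMeasurable_firstVariation_gramKernel {b : ι → B.space}
    (hb : ∀ s, LinearIndependent ℂ fun i => B.embed s (b i)) (μ : Measure ℝ) :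
    AEStronglyMeasurable (fun s => B.firstVariation s (B.gramKernel b s)) μ := by
  have hderiv : (fun s => B.firstVariation s (B.gramKernel b s)) =
      deriv fun s => Complex.log (B.gram b s).det :=
    funext fun s => (B.hasDerivAt_log_det_gram (hb s)).deriv.symm
  rw [hderiv]
  exact (measurable_deriv _).aestronglyMeasurable

end Gram

namespace IsReproducingKernel

lemma aestronglyMeasurable_apply_self_mul [SigmaFinite ν]
    [MeasurableSpace.CountablyGenerated α] (hK : B.IsReproducingKernel E t K)
    (hE : ∀ᵐ z ∂ν, z ∈ E) :
    AEStronglyMeasurable (fun z => K z z * (-B.v z * B.weight t z : ℂ)) ν := by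
  obtain ⟨d, b, hb, hlim⟩ := B.exists_approximation
  exact aestronglyMeasurable_of_tendsto_ae atTop
    (fun N => aestronglyMeasurable_gramKernel_mul (b N) t)
    (hE.mono fun z hz => (hK.tendsto_gramKernel (hb · t) (hlim t) hz hz).mul_const _)

lemma tendsto_fredholmDet_gramKernel [SigmaFinite ν] {d : ℕ → ℕ} {b : ∀ N, Fin (d N) → B.space}
    (hK : B.IsReproducingKernel E t K) (hE : ∀ᵐ z ∂ν, z ∈ E)
    (hint : Integrable (fun z => ‖K z z‖ * (|B.v z| * B.weight t z)) ν)
    (hb : ∀ N, LinearIndependent ℂ fun i => B.embed t (b N i))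
    (hlim : ∀ g : B.space, Tendsto (fun N => (Submodule.span ℂ
      (Set.range fun i => B.embed t (b N i))).starProjection (B.embed t g)) atTop
      (𝓝 (B.embed t g))) (hst : |s - t| ≤ 1) :
    Tendsto (fun N => fredholmDet ν (B.gramKernel (b N) t)
      (fun z => B.weight s z - B.weight t z)) atTop
      (𝓝 (fredholmDet ν K (fun z => B.weight s z - B.weight t z))) := by
  refine tendsto_fredholmDet hE
    (fun N m => (B.integrable_det_gramKernel_mul_prod (fun i j =>
      B.integrable_conj_mul_mul_weight_sub s (b N i) (b N j)) m).aestronglyMeasurable)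
    (fun N m z hz => hK.posSemidef_gramKernel (hb N) hz) (hint.const_mul (Real.exp B.M))
    (fun N z hz => ?_) fun z hz w hw => hK.tendsto_gramKernel hb hlim hz hw
  rw [norm_mul, ← ofReal_sub, Complex.norm_real, mul_left_comm]
  exact mul_le_mul (hK.norm_gramKernel_self_le (hb N) hz) (B.abs_weight_sub_le hst z)
    (norm_nonneg _) (norm_nonneg _)

end IsReproducingKernel

end FirstVariation

section Path

variable {E : Set α} {K : ℝ → α → α → ℂ} {t : ℝ}

lemma continuousOn_apply_self
    (hK : ∀ s ∈ Set.Icc (0 : ℝ) 1, B.IsReproducingKernel E s (K s)) {w : α} (hw : w ∈ E) :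
    ContinuousOn (fun s => K s w w) (Set.Icc (0 : ℝ) 1) := by
  have hnorm : ContinuousOn (fun s => ‖K s w w‖) (Set.Icc (0 : ℝ) 1) := fun t ht => by
    have hexp (c : ℝ) : Tendsto (fun s => Real.exp (c * |s - t|) * ‖K t w w‖)
        (𝓝[Set.Icc 0 1] t) (𝓝 ‖K t w w‖) := by
      have hcont : Continuous fun s : ℝ => Real.exp (c * |s - t|) * ‖K t w w‖ := by fun_prop
      simpa using (hcont.tendsto t).mono_left nhdsWithin_le_nhds
    refine tendsto_of_tendsto_of_tendsto_of_le_of_le' (hexp (-B.M)) (hexp B.M) ?_ ?_ <;>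
      filter_upwards [self_mem_nhdsWithin] with s hs
    · have h := (hK s hs).norm_apply_self_le hw (hK t ht)
      rwa [neg_mul, Real.exp_neg, inv_mul_le_iff₀ (Real.exp_pos _), abs_sub_comm]
    · exact (hK t ht).norm_apply_self_le hw (hK s hs)
  exact (continuous_ofReal.comp_continuousOn hnorm).congr
    fun s hs => (hK s hs).apply_self_eq_norm hw

section Gram

variable {ι : Type*} [Fintype ι] [DecidableEq ι] {b : ι → B.space}
  (hK : ∀ s ∈ Set.Icc (0 : ℝ) 1, B.IsReproducingKernel E s (K s))
  (hb : ∀ s, LinearIndependent ℂ fun i => B.embed s (b i))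

include hK hb

lemma norm_gramKernel_mul_le (ht : t ∈ Set.Icc (0 : ℝ) 1) {w : α} (hw : w ∈ E) :
    ‖B.gramKernel b t w w * (-B.v w * B.weight t w : ℂ)‖ ≤
      Real.exp B.M ^ 2 * (‖K 0 w w‖ * (|B.v w| * B.weight 0 w)) := by
  have hKt := hK t ht
  have hweight := (B.weight_pos t w).le
  calc ‖B.gramKernel b t w w * (-B.v w * B.weight t w : ℂ)‖
      ≤ ‖K t w w‖ * (|B.v w| * B.weight t w) := by
        rw [norm_mul_neg_v_mul_weight]
        gcongr
        exact hKt.norm_gramKernel_self_le (hb t) hw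
    _ ≤ _ := (hK 0 unitInterval.zero_mem).norm_apply_self_mul_le hKt
        (Real.dist_le_of_mem_Icc_01 ht unitInterval.zero_mem) hw

variable (hE : ∀ᵐ z ∂ν, z ∈ E)
  (hint : Integrable (fun z => ‖K 0 z z‖ * (|B.v z| * B.weight 0 z)) ν)

include hE hint

lemma norm_firstVariation_gramKernel_le (ht : t ∈ Set.Icc (0 : ℝ) 1) :
    ‖B.firstVariation t (B.gramKernel b t)‖ ≤
      ∫ z, Real.exp B.M ^ 2 * (‖K 0 z z‖ * (|B.v z| * B.weight 0 z)) ∂ν :=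
  norm_integral_le_of_norm_le (hint.const_mul _)
    (hE.mono fun _ hz => norm_gramKernel_mul_le hK hb ht hz)

lemma fredholmDet_gramKernel_eq_exp [SigmaFinite ν] (ht : t ∈ Set.Icc (0 : ℝ) 1) :
    fredholmDet ν (B.gramKernel b 0) (fun z => B.weight t z - B.weight 0 z) =
      Complex.exp (∫ s in (0 : ℝ)..t, B.firstVariation s (B.gramKernel b s)) := by
  have hintegrable : IntervalIntegrable (fun s => B.firstVariation s (B.gramKernel b s))
      volume 0 t := by
    refine intervalIntegrable_const.mono_fun' (aestronglyMeasurable_firstVariation_gramKernel hb _)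
      ((ae_restrict_mem measurableSet_uIoc).mono fun s hs =>
        norm_firstVariation_gramKernel_le hK hb hE hint ?_)
    rw [Set.uIoc_of_le ht.1] at hs
    exact ⟨hs.1.le, hs.2.trans ht.2⟩
  rw [B.fredholmDet_gramKernel_weight_sub t (hb 0),
    intervalIntegral.integral_eq_sub_of_hasDerivAt
      (fun s _ => B.hasDerivAt_log_det_gram (hb s)) hintegrable,
    Complex.exp_sub, Complex.exp_log (B.det_gram_pos (hb t)).ne',
    Complex.exp_log (B.det_gram_pos (hb 0)).ne']

end Gram

section Limit

variable (hK : ∀ s ∈ Set.Icc (0 : ℝ) 1, B.IsReproducingKernel E s (K s))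
  (hE : ∀ᵐ z ∂ν, z ∈ E)
  (hint : Integrable (fun z => ‖K 0 z z‖ * (|B.v z| * B.weight 0 z)) ν)

section Approximation

variable {d : ℕ → ℕ} {b : ∀ N, Fin (d N) → B.space}
  (hb : ∀ N s, LinearIndependent ℂ fun i => B.embed s (b N i))
  (hlim : ∀ s (g : B.space), Tendsto (fun N => (Submodule.span ℂ
    (Set.range fun i => B.embed s (b N i))).starProjection (B.embed s g)) atTop
    (𝓝 (B.embed s g)))

include hK hE hint hb hlim

lemma tendsto_firstVariation_gramKernel (ht : t ∈ Set.Icc (0 : ℝ) 1) :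
    Tendsto (fun N => B.firstVariation t (B.gramKernel (b N) t)) atTop
      (𝓝 (B.firstVariation t (K t))) := by
  refine tendsto_integral_of_dominated_convergence _
    (fun N => aestronglyMeasurable_gramKernel_mul (b N) t) (hint.const_mul (Real.exp B.M ^ 2))
    (fun N => hE.mono fun z hz => norm_gramKernel_mul_le hK (hb N) ht hz)
    (hE.mono fun z hz => ?_)
  exact ((hK t ht).tendsto_gramKernel (hb · t) (hlim t) hz hz).mul_const _

end Approximation

variable [SigmaFinite ν] [MeasurableSpace.CountablyGenerated α]

include hK hE hint

lemma fredholmDet_eq_exp (ht : t ∈ Set.Icc (0 : ℝ) 1) :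
    fredholmDet ν (K 0) (fun z => B.weight t z - B.weight 0 z) =
      Complex.exp (∫ s in (0 : ℝ)..t, B.firstVariation s (K s)) := by
  obtain ⟨d, b, hb, hlim⟩ := B.exists_approximation
  have hIcc {s : ℝ} (hs : s ∈ Set.uIoc 0 t) : s ∈ Set.Icc (0 : ℝ) 1 := by
    rw [Set.uIoc_of_le ht.1] at hs
    exact ⟨hs.1.le, hs.2.trans ht.2⟩
  have hintegral : Tendsto
      (fun N => ∫ s in (0 : ℝ)..t, B.firstVariation s (B.gramKernel (b N) s)) atTop
      (𝓝 (∫ s in (0 : ℝ)..t, B.firstVariation s (K s))) :=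
    intervalIntegral.tendsto_integral_filter_of_dominated_convergence _
      (Eventually.of_forall fun N => aestronglyMeasurable_firstVariation_gramKernel (hb N) _)
      (Eventually.of_forall fun N => Eventually.of_forall fun s hs =>
        norm_firstVariation_gramKernel_le hK (hb N) hE hint (hIcc hs))
      intervalIntegrable_const
      (Eventually.of_forall fun s hs =>
        tendsto_firstVariation_gramKernel hK hE hint hb hlim (hIcc hs))
  refine tendsto_nhds_unique ((hK 0 unitInterval.zero_mem).tendsto_fredholmDet_gramKernel hE hint
    (hb · 0) (hlim 0) (Real.dist_le_of_mem_Icc_01 ht unitInterval.zero_mem)) ?_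
  simp only [fredholmDet_gramKernel_eq_exp hK (hb _) hE hint ht]
  exact (Complex.continuous_exp.tendsto _).comp hintegral

lemma continuousOn_firstVariation :
    ContinuousOn (fun s => B.firstVariation s (K s)) (Set.Icc (0 : ℝ) 1) := by
  refine continuousOn_of_dominated
    (fun s hs => (hK s hs).aestronglyMeasurable_apply_self_mul hE)
    (fun s hs => hE.mono fun z hz => ?_)
    (hint.const_mul (Real.exp B.M ^ 2)) (hE.mono fun z hz => ?_)
  · rw [norm_mul_neg_v_mul_weight]
    exact (hK 0 unitInterval.zero_mem).norm_apply_self_mul_le (hK s hs)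
      (Real.dist_le_of_mem_Icc_01 hs unitInterval.zero_mem) hz
  · refine (continuousOn_apply_self hK hz).mul (Continuous.continuousOn ?_)
    simp only [weight]
    fun_prop

lemma fredholmDet_eq_ofReal_exp (ht : t ∈ Set.Icc (0 : ℝ) 1) :
    fredholmDet ν (K 0) (fun z => B.weight t z - B.weight 0 z) =
      (Real.exp (∫ s in (0 : ℝ)..t, (B.firstVariation s (K s)).re) : ℝ) := by
  rw [fredholmDet_eq_exp hK hE hint ht, ofReal_exp, ← intervalIntegral.integral_ofReal]
  congr 1
  refine intervalIntegral.integral_congr fun s hs => ?_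
  rw [Set.uIcc_of_le ht.1] at hs
  rw [(hK s ⟨hs.1, hs.2.trans ht.2⟩).firstVariation_eq_ofReal hE, ofReal_re]

theorem fredholmDet_pos (ht : t ∈ Set.Icc (0 : ℝ) 1) :
    0 < fredholmDet ν (K 0) (fun z => B.weight t z - B.weight 0 z) := by
  rw [fredholmDet_eq_ofReal_exp hK hE hint ht]
  exact zero_lt_real.2 (Real.exp_pos _)

theorem hasDerivWithinAt_log_fredholmDet (ht : t ∈ Set.Icc (0 : ℝ) 1) :
    HasDerivWithinAt
      (fun s => Real.log (fredholmDet ν (K 0) (fun z => B.weight s z - B.weight 0 z)).re)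
      (∫ z, (K t z z).re * (-B.v z * B.weight t z) ∂ν) (Set.Icc (0 : ℝ) 1) t := by
  have hcont : ContinuousOn (fun s => (B.firstVariation s (K s)).re) (Set.Icc (0 : ℝ) 1) :=
    continuous_re.comp_continuousOn (continuousOn_firstVariation hK hE hint)
  have hlog : ∀ s ∈ Set.Icc (0 : ℝ) 1,
      Real.log (fredholmDet ν (K 0) (fun z => B.weight s z - B.weight 0 z)).re =
        ∫ r in (0 : ℝ)..s, (B.firstVariation r (K r)).re := fun s hs => by
    rw [fredholmDet_eq_ofReal_exp hK hE hint hs, ofReal_re, Real.log_exp]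
  have hfact : Fact (t ∈ Set.Icc (0 : ℝ) 1) := ⟨ht⟩
  have hderiv : HasDerivWithinAt (fun s => ∫ r in (0 : ℝ)..s, (B.firstVariation r (K r)).re)
      (B.firstVariation t (K t)).re (Set.Icc (0 : ℝ) 1) t :=
    intervalIntegral.integral_hasDerivWithinAt_right
      (hcont.mono (by
        rw [Set.uIcc_of_le ht.1]
        exact Set.Icc_subset_Icc_right ht.2)).intervalIntegrable
      (hcont.stronglyMeasurableAtFilter_nhdsWithin measurableSet_Icc t) (hcont t ht)
  rw [(hK t ht).firstVariation_eq_ofReal hE, ofReal_re] at hderiv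
  exact hderiv.congr hlog (hlog t ht)

end Limit

end Path

end WeightedSpace

section MeanValue

lemma measurePreserving_add_smul {ι : Type*} [Fintype ι] (a : ι → ℂ) {c : ℂ} (hc : ‖c‖ = 1) :
    MeasurePreserving (fun v : ι → ℂ => a + c • v) volume volume := by
  have hrotation : MeasurePreserving (fun ζ : ℂ => c * ζ) volume volume :=
    (rotation ⟨c, mem_sphere_zero_iff_norm.2 hc⟩).measurePreserving
  exact (measurePreserving_add_left volume a).comp
    (measurePreserving_pi (fun _ : ι => (volume : Measure ℂ)) (fun _ => volume) fun _ => hrotation)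

lemma setLIntegral_ball_add_smul {ι : Type*} [Fintype ι] (a : ι → ℂ) (r : ℝ) {c : ℂ}
    (hc : ‖c‖ = 1) (g : (ι → ℂ) → ℝ≥0∞) :
    ∫⁻ v in Metric.ball 0 r, g (a + c • v) = ∫⁻ w in Metric.ball a r, g w := by
  have hemb : MeasurableEmbedding fun v : ι → ℂ => a + c • v :=
    ((Homeomorph.smulOfNeZero c (norm_ne_zero_iff.1 (hc ▸ one_ne_zero))).trans
      (Homeomorph.addLeft a)).measurableEmbedding
  have hball : (fun v : ι → ℂ => a + c • v) ⁻¹' Metric.ball a r = Metric.ball 0 r := by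
    ext v
    simp [norm_smul, hc]
  have hcomp := (measurePreserving_add_smul a hc).setLIntegral_comp_preimage_emb hemb g
    (Metric.ball a r)
  rwa [hball] at hcomp

lemma add_smul_mem_ball {V : Type*} [NormedAddCommGroup V] [NormedSpace ℂ V] {a v : V} {r : ℝ}
    (hv : v ∈ Metric.ball 0 r) {ζ : ℂ} (hζ : ‖ζ‖ ≤ 1) : a + ζ • v ∈ Metric.ball a r := by
  rw [mem_ball_zero_iff] at hv
  rw [mem_ball_iff_norm, add_sub_cancel_left, norm_smul]
  exact (mul_le_of_le_one_left (norm_nonneg v) hζ).trans_lt hv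

lemma enorm_le_lintegral_circleMap {V F : Type*} [NormedAddCommGroup V] [NormedSpace ℂ V]
    [NormedAddCommGroup F] [NormedSpace ℂ F] [CompleteSpace F] {f : V → F} {a v : V} {r : ℝ}
    (hf : DifferentiableOn ℂ f (Metric.ball a r)) (hv : v ∈ Metric.ball 0 r) :
    ‖f a‖ₑ ≤ (ENNReal.ofReal (2 * π))⁻¹ *
      ∫⁻ θ in Set.Ioc 0 (2 * π), ‖f (a + circleMap 0 1 θ • v)‖ₑ := by
  have hslice : DifferentiableOn ℂ (fun ζ : ℂ => f (a + ζ • v)) (Metric.closedBall 0 1) :=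
    hf.comp (by fun_prop) fun ζ hζ => add_smul_mem_ball hv (mem_closedBall_zero_iff.1 hζ)
  have hdiff : DiffContOnCl ℂ (fun ζ : ℂ => f (a + ζ • v)) (Metric.ball 0 |1|) := by
    rw [abs_one]
    exact (hslice.mono Metric.closure_ball_subset_closedBall).diffContOnCl
  have hmean := hdiff.circleAverage
  simp only [zero_smul, add_zero] at hmean
  rw [← hmean, Real.circleAverage_def, intervalIntegral.integral_of_le Real.two_pi_pos.le,
    enorm_smul, Real.enorm_eq_ofReal (inv_nonneg.2 Real.two_pi_pos.le),
    ENNReal.ofReal_inv_of_pos Real.two_pi_pos]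
  gcongr
  exact enorm_integral_le_lintegral_enorm _

lemma enorm_mul_volume_ball_le_lintegral {ι F : Type*} [Fintype ι] [NormedAddCommGroup F]
    [NormedSpace ℂ F] [CompleteSpace F] {f : (ι → ℂ) → F} {a : ι → ℂ} {r : ℝ}
    (hf : DifferentiableOn ℂ f (Metric.ball a r)) :
    ‖f a‖ₑ * volume (Metric.ball (0 : ι → ℂ) r) ≤ ∫⁻ w in Metric.ball a r, ‖f w‖ₑ := by
  have hpi : ENNReal.ofReal (2 * π) ≠ 0 := (ENNReal.ofReal_pos.2 Real.two_pi_pos).ne'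
  have hmeas : AEMeasurable (fun p : (ι → ℂ) × ℝ => ‖f (a + circleMap 0 1 p.2 • p.1)‖ₑ)
      ((volume.restrict (Metric.ball 0 r)).prod (volume.restrict (Set.Ioc 0 (2 * π)))) := by
    rw [Measure.prod_restrict]
    have : Continuous (circleMap 0 1) := continuous_circleMap 0 1
    refine ContinuousOn.aemeasurable (ContinuousOn.enorm (hf.continuousOn.comp
      (by fun_prop) fun p hp => add_smul_mem_ball hp.1 ?_))
      (measurableSet_ball.prod measurableSet_Ioc)
    rw [norm_circleMap_zero, abs_one]
  calc ‖f a‖ₑ * volume (Metric.ball (0 : ι → ℂ) r)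
      = ∫⁻ _ in Metric.ball (0 : ι → ℂ) r, ‖f a‖ₑ := (setLIntegral_const _ _).symm
    _ ≤ ∫⁻ v in Metric.ball (0 : ι → ℂ) r, (ENNReal.ofReal (2 * π))⁻¹ *
          ∫⁻ θ in Set.Ioc 0 (2 * π), ‖f (a + circleMap 0 1 θ • v)‖ₑ :=
        setLIntegral_mono' measurableSet_ball fun _ hv => enorm_le_lintegral_circleMap hf hv
    _ = (ENNReal.ofReal (2 * π))⁻¹ * ∫⁻ θ in Set.Ioc 0 (2 * π),
          ∫⁻ v in Metric.ball (0 : ι → ℂ) r, ‖f (a + circleMap 0 1 θ • v)‖ₑ := by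
        rw [lintegral_const_mul' _ _ (ENNReal.inv_ne_top.2 hpi), lintegral_lintegral_swap hmeas]
    _ = (ENNReal.ofReal (2 * π))⁻¹ * ∫⁻ _ in Set.Ioc 0 (2 * π),
          ∫⁻ w in Metric.ball a r, ‖f w‖ₑ := by
        congr 1
        refine lintegral_congr fun θ => setLIntegral_ball_add_smul a r ?_ fun w => ‖f w‖ₑ
        rw [norm_circleMap_zero, abs_one]
    _ = ∫⁻ w in Metric.ball a r, ‖f w‖ₑ := by
        rw [setLIntegral_const, Real.volume_Ioc, sub_zero, mul_comm (lintegral _ _), ← mul_assoc,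
          ENNReal.inv_mul_cancel hpi ENNReal.ofReal_ne_top, one_mul]

end MeanValue

section Bergman

variable {Ω : Set (Fin n → ℂ)} {ψ : (Fin n → ℂ) → ℝ} {f : (Fin n → ℂ) → ℂ}

lemma enorm_sq_le_exp_mul {c : ℝ} {z : Fin n → ℂ} (hz : ψ z ≤ c) :
    ‖f z ^ 2‖ₑ ≤ ENNReal.ofReal (Real.exp c) *
      ENNReal.ofReal (‖f z‖ ^ 2 * Real.exp (-ψ z)) := by
  rw [← ENNReal.ofReal_mul (Real.exp_pos c).le, ← ofReal_norm, norm_pow, mul_left_comm,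
    ← Real.exp_add]
  refine ENNReal.ofReal_le_ofReal (le_mul_of_one_le_right (sq_nonneg _) (Real.one_le_exp ?_))
  linarith

lemma norm_sq_mul_volume_ball_le_wnorm2 {z : Fin n → ℂ} {r c : ℝ}
    (hball : Metric.ball z r ⊆ Ω) (hψ : ∀ w ∈ Metric.ball z r, ψ w ≤ c)
    (hf : DifferentiableOn ℂ f Ω) :
    ENNReal.ofReal (‖f z‖ ^ 2) * volume (Metric.ball (0 : Fin n → ℂ) r) ≤
      ENNReal.ofReal (Real.exp c) * wnorm2 Ω ψ f := by
  calc ENNReal.ofReal (‖f z‖ ^ 2) * volume (Metric.ball (0 : Fin n → ℂ) r)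
      = ‖f z ^ 2‖ₑ * volume (Metric.ball (0 : Fin n → ℂ) r) := by rw [← norm_pow, ofReal_norm]
    _ ≤ ∫⁻ w in Metric.ball z r, ‖f w ^ 2‖ₑ :=
        enorm_mul_volume_ball_le_lintegral (f := fun w => f w ^ 2) ((hf.mono hball).pow 2)
    _ ≤ ∫⁻ w in Metric.ball z r,
          ENNReal.ofReal (Real.exp c) * ENNReal.ofReal (‖f w‖ ^ 2 * Real.exp (-ψ w)) :=
        setLIntegral_mono' measurableSet_ball fun w hw => enorm_sq_le_exp_mul (hψ w hw)
    _ ≤ ∫⁻ w in Ω, ENNReal.ofReal (Real.exp c) * ENNReal.ofReal (‖f w‖ ^ 2 * Real.exp (-ψ w)) :=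
        lintegral_mono_set hball
    _ = ENNReal.ofReal (Real.exp c) * wnorm2 Ω ψ f := by
        rw [wnorm2, lintegral_const_mul' _ _ ENNReal.ofReal_ne_top]

lemma exists_norm_sq_le_mul_wnorm2 (hΩ : IsOpen Ω) (hψ : ContinuousOn ψ Ω)
    {L : Set (Fin n → ℂ)} (hL : IsCompact L) (hLΩ : L ⊆ Ω) :
    ∃ C : ℝ≥0∞, C ≠ ⊤ ∧ ∀ f, DifferentiableOn ℂ f Ω → ∀ z ∈ L,
      ENNReal.ofReal (‖f z‖ ^ 2) ≤ C * wnorm2 Ω ψ f := by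
  obtain ⟨r, hr, hrΩ⟩ := hL.exists_cthickening_subset_open hΩ hLΩ
  obtain ⟨A, hA⟩ := (hL.cthickening.image_of_continuousOn (hψ.mono hrΩ)).bddAbove
  have hV0 : volume (Metric.ball (0 : Fin n → ℂ) r) ≠ 0 := (Metric.measure_ball_pos _ _ hr).ne'
  have hVtop : volume (Metric.ball (0 : Fin n → ℂ) r) ≠ ⊤ := measure_ball_lt_top.ne
  refine ⟨ENNReal.ofReal (Real.exp A) / volume (Metric.ball (0 : Fin n → ℂ) r),
    ENNReal.div_ne_top ENNReal.ofReal_ne_top hV0, fun f hf z hz => ?_⟩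
  have hball : Metric.ball z r ⊆ Metric.cthickening r L :=
    (Metric.ball_subset_thickening hz r).trans (Metric.thickening_subset_cthickening r L)
  rw [← ENNReal.mul_div_right_comm, ENNReal.le_div_iff_mul_le (.inl hV0) (.inl hVtop)]
  exact norm_sq_mul_volume_ball_le_wnorm2 (hball.trans hrΩ)
    (fun w hw => hA (Set.mem_image_of_mem ψ (hball hw))) hf

lemma memBergman_of_le_add {χ : (Fin n → ℂ) → ℝ} {c : ℝ} (hle : ∀ z, ψ z ≤ χ z + c)
    (hf : MemBergman Ω ψ f) : MemBergman Ω χ f := by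
  refine ⟨hf.1, lt_of_le_of_lt ?_ (ENNReal.mul_lt_top ENNReal.ofReal_lt_top hf.2 :
    ENNReal.ofReal (Real.exp c) * wnorm2 Ω ψ f < ⊤)⟩
  rw [wnorm2, wnorm2, ← lintegral_const_mul' _ _ ENNReal.ofReal_ne_top]
  refine lintegral_mono fun z => ?_
  rw [← ENNReal.ofReal_mul (Real.exp_pos c).le, mul_left_comm, ← Real.exp_add]
  gcongr
  linarith [hle z]

lemma wInner_self (hΩ : IsOpen Ω) (hψ : ContinuousOn ψ Ω) (hf : DifferentiableOn ℂ f Ω) :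
    wInner Ω ψ f f = (wnorm2 Ω ψ f).toReal := by
  have hmeas : AEStronglyMeasurable (fun z => ‖f z‖ ^ 2 * Real.exp (-ψ z)) (volume.restrict Ω) :=
    ((hf.continuousOn.norm.pow 2).mul hψ.neg.rexp).aestronglyMeasurable hΩ.measurableSet
  rw [wnorm2, ← integral_eq_lintegral_of_nonneg_ae (Eventually.of_forall fun z => by positivity)
    hmeas, ← integral_complex_ofReal]
  simp only [wInner, mul_conj, normSq_eq_norm_sq, ofReal_mul]

/-- The members of `H(ψ)`, with square integrability phrased in `L²(Ω)` so that they visibly form a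
vector space. -/
def bergmanSpace (Ω : Set (Fin n → ℂ)) (ψ : (Fin n → ℂ) → ℝ) : Submodule ℂ ((Fin n → ℂ) → ℂ) where
  carrier := {f | DifferentiableOn ℂ f Ω ∧
    MemLp (fun z => Real.exp (-ψ z / 2) • f z) 2 (volume.restrict Ω)}
  add_mem' hf hg := ⟨hf.1.add hg.1, by
    simpa only [Pi.add_apply, Pi.add_def, smul_add] using hf.2.add hg.2⟩
  zero_mem' := ⟨differentiableOn_const 0, by simp⟩
  smul_mem' c f hf := ⟨hf.1.const_smul c, by
    simpa only [Pi.smul_apply, Pi.smul_def, smul_comm c] using hf.2.const_smul c⟩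

lemma mem_bergmanSpace_iff (hΩ : IsOpen Ω) (hψ : ContinuousOn ψ Ω) :
    f ∈ bergmanSpace Ω ψ ↔ MemBergman Ω ψ f := by
  refine and_congr_right fun hf => ?_
  have hmeas : AEStronglyMeasurable (fun z => Real.exp (-ψ z / 2) • f z) (volume.restrict Ω) :=
    ((hψ.neg.div_const 2).rexp.smul hf.continuousOn).aestronglyMeasurable hΩ.measurableSet
  have hnorm (z : Fin n → ℂ) :
      ‖Real.exp (-ψ z / 2) • f z‖ ^ 2 = ‖f z‖ ^ 2 * Real.exp (-ψ z) := by
    rw [norm_smul, Real.norm_of_nonneg (Real.exp_pos _).le, mul_pow, ← Real.exp_nat_mul, mul_comm,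
      Nat.cast_ofNat, mul_div_cancel₀ _ two_ne_zero]
  rw [wnorm2, lt_top_iff_ne_top, memLp_two_iff_integrable_sq_norm hmeas]
  simp only [hnorm]
  exact (lintegral_ofReal_ne_top_iff_integrable ((hmeas.norm.pow 2).congr
    (Eventually.of_forall hnorm))
    (Eventually.of_forall fun z => by positivity)).symm

/-- `K` is the reproducing kernel of `H(ψ)`. -/
structure IsBergmanKernel (Ω : Set (Fin n → ℂ)) (ψ : (Fin n → ℂ) → ℝ)
    (K : (Fin n → ℂ) → (Fin n → ℂ) → ℂ) : Prop where
  mem : ∀ w ∈ Ω, MemBergman Ω ψ fun z => K z w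
  reproduce : ∀ w ∈ Ω, ∀ f, MemBergman Ω ψ f → wInner Ω ψ f (fun z => K z w) = f w

lemma IsBergmanKernel.exists_norm_apply_self_le {K : (Fin n → ℂ) → (Fin n → ℂ) → ℂ}
    (hK : IsBergmanKernel Ω ψ K) (hΩ : IsOpen Ω) (hψ : ContinuousOn ψ Ω)
    {L : Set (Fin n → ℂ)} (hL : IsCompact L) (hLΩ : L ⊆ Ω) :
    ∃ C : ℝ, ∀ w ∈ L, ‖K w w‖ ≤ C := by
  obtain ⟨C, hC, hbound⟩ := exists_norm_sq_le_mul_wnorm2 hΩ hψ hL hLΩ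
  refine ⟨C.toReal, fun w hw => ?_⟩
  have hmem := hK.mem w (hLΩ hw)
  have hself : ‖K w w‖ = (wnorm2 Ω ψ fun z => K z w).toReal := by
    rw [← hK.reproduce w (hLΩ hw) _ hmem, wInner_self hΩ hψ hmem.1, Complex.norm_real,
      Real.norm_of_nonneg ENNReal.toReal_nonneg]
  have hsq : ‖K w w‖ * ‖K w w‖ ≤ C.toReal * ‖K w w‖ := by
    have h := ENNReal.toReal_mono (ENNReal.mul_ne_top hC hmem.2.ne) (hbound _ hmem.1 w hw)
    rwa [ENNReal.toReal_ofReal (sq_nonneg _), ENNReal.toReal_mul, ← hself, sq] at h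
  rcases (norm_nonneg (K w w)).eq_or_lt with hzero | hpos
  · rw [← hzero]
    exact ENNReal.toReal_nonneg
  · exact le_of_mul_le_mul_right hsq hpos

end Bergman

section Path

variable {Ω : Set (Fin n → ℂ)} {φ u : (Fin n → ℂ) → ℝ} {k : ℝ} {M : NNReal}
  (hu : Continuous u) (hM : ∀ z, |u z| ≤ M)

/-- The Bergman space of the weight `k φ`, with the weight varied in the direction `k u`. -/
def bergmanWeightedSpace (Ω : Set (Fin n → ℂ)) (φ : (Fin n → ℂ) → ℝ) (k : ℝ) (hu : Continuous u)
    (hM : ∀ z, |u z| ≤ M) : WeightedSpace (volume.restrict Ω) where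
  ψ z := k * φ z
  v z := k * u z
  M := Real.nnabs k * M
  space := bergmanSpace Ω fun z => k * φ z
  aemeasurable_v := (hu.const_mul k).measurable.aemeasurable
  abs_v_le z := by
    rw [abs_mul, NNReal.coe_mul, Real.coe_nnabs]
    exact mul_le_mul_of_nonneg_left (hM z) (abs_nonneg k)
  memLp _ hf := hf.2

lemma weight_bergmanWeightedSpace (t : ℝ) (z : Fin n → ℂ) :
    (bergmanWeightedSpace Ω φ k hu hM).weight t z = Real.exp (-(k * (φ z + t * u z))) := by
  rw [mul_add, mul_left_comm]
  rfl

lemma weight_sub_weight_zero_bergmanWeightedSpace (t : ℝ) (z : Fin n → ℂ) :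
    (bergmanWeightedSpace Ω φ k hu hM).weight t z - (bergmanWeightedSpace Ω φ k hu hM).weight 0 z =
      (Real.exp (-(k * (t * u z))) - 1) * Real.exp (-(k * φ z)) := by
  rw [weight_bergmanWeightedSpace, weight_bergmanWeightedSpace, sub_one_mul, ← Real.exp_add]
  ring_nf

lemma continuousOn_mul_add_mul (hφ : ContinuousOn φ Ω) (hu : Continuous u) (t : ℝ) :
    ContinuousOn (fun z => k * (φ z + t * u z)) Ω :=
  (hφ.add (hu.const_mul t).continuousOn).const_mul k

lemma mem_space_bergmanWeightedSpace_iff (hΩ : IsOpen Ω) (hφ : ContinuousOn φ Ω) (t : ℝ)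
    {f : (Fin n → ℂ) → ℂ} : f ∈ (bergmanWeightedSpace Ω φ k hu hM).space ↔
      MemBergman Ω (fun z => k * (φ z + t * u z)) f := by
  have hbound (z : Fin n → ℂ) : |k * (t * u z)| ≤ |k| * (|t| * M) := by
    rw [abs_mul, abs_mul]
    gcongr
    exact hM z
  have hmem : f ∈ (bergmanWeightedSpace Ω φ k hu hM).space ↔
      MemBergman Ω (fun z => k * φ z) f := mem_bergmanSpace_iff hΩ (hφ.const_mul k)
  rw [hmem]
  constructor <;> refine memBergman_of_le_add (c := |k| * (|t| * M)) fun z => ?_ <;>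
    linarith [abs_le.1 (hbound z)]

variable {t : ℝ} {K : (Fin n → ℂ) → (Fin n → ℂ) → ℂ}

lemma IsBergmanKernel.isReproducingKernel
    (hK : IsBergmanKernel Ω (fun z => k * (φ z + t * u z)) K) (hΩ : IsOpen Ω)
    (hφ : ContinuousOn φ Ω) :
    (bergmanWeightedSpace Ω φ k hu hM).IsReproducingKernel Ω t K where
  mem w hw := (mem_space_bergmanWeightedSpace_iff hu hM hΩ hφ t).2 (hK.mem w hw)
  reproduce w hw f hf := by
    simp only [weight_bergmanWeightedSpace]
    exact hK.reproduce w hw f ((mem_space_bergmanWeightedSpace_iff hu hM hΩ hφ t).1 hf)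

lemma fredholmDet_weight_sub_bergmanWeightedSpace (t : ℝ)
    (K : (Fin n → ℂ) → (Fin n → ℂ) → ℂ) :
    fredholmDet (volume.restrict Ω) K
      (fun z => (bergmanWeightedSpace Ω φ k hu hM).weight t z -
        (bergmanWeightedSpace Ω φ k hu hM).weight 0 z) =
      ∑' m : ℕ, (m.factorial : ℝ)⁻¹ • ∫ z : Fin m → Fin n → ℂ in Set.univ.pi fun _ : Fin m => Ω,
        (Matrix.of fun i j : Fin m => K (z i) (z j)).det *
          ((∏ l, (Real.exp (-(k * (t * u (z l)))) - 1) * Real.exp (-(k * φ (z l))) : ℝ) : ℂ) := by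
  simp only [fredholmDet, volume_pi, Measure.restrict_pi_pi, ofReal_prod, ← ofReal_sub,
    weight_sub_weight_zero_bergmanWeightedSpace]

lemma integrable_abs_mul_exp_of_hasCompactSupport (hφ : ContinuousOn φ Ω) (hu : Continuous u)
    (huc : HasCompactSupport u) (hus : tsupport u ⊆ Ω) (k t : ℝ) :
    Integrable (fun z => |k * u z| * Real.exp (-(k * (φ z + t * u z)))) (volume.restrict Ω) := by
  have hcont : ContinuousOn (fun z => |k * u z| * Real.exp (-(k * (φ z + t * u z))))
      (tsupport u) :=
    (hu.const_mul k).abs.continuousOn.mul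
      ((continuousOn_mul_add_mul hφ hu t).mono hus).neg.rexp
  refine ((integrableOn_iff_integrable_of_support_subset (Function.support_subset_iff'.2
    fun z hz => ?_)).1 (hcont.integrableOn_compact huc)).restrict
  rw [image_eq_zero_of_notMem_tsupport hz, mul_zero, abs_zero, zero_mul]

lemma IsBergmanKernel.integrable_norm_apply_self_mul_weight
    (hK : IsBergmanKernel Ω (fun z => k * (φ z + t * u z)) K)
    (hΩ : IsOpen Ω) (hφ : ContinuousOn φ Ω) (huc : HasCompactSupport u) (hus : tsupport u ⊆ Ω) :
    Integrable (fun z => ‖K z z‖ * (|(bergmanWeightedSpace Ω φ k hu hM).v z| *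
      (bergmanWeightedSpace Ω φ k hu hM).weight t z)) (volume.restrict Ω) := by
  obtain ⟨C, hC⟩ := hK.exists_norm_apply_self_le hΩ (continuousOn_mul_add_mul hφ hu t) huc hus
  have hmeas := ((hK.isReproducingKernel hu hM hΩ hφ).aestronglyMeasurable_apply_self_mul
    (ae_restrict_mem hΩ.measurableSet)).norm
  simp only [WeightedSpace.norm_mul_neg_v_mul_weight] at hmeas
  have hfactor := integrable_abs_mul_exp_of_hasCompactSupport hφ hu huc hus k t
  simp only [← weight_bergmanWeightedSpace (Ω := Ω) hu hM] at hfactor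
  refine (hfactor.const_mul C).mono' hmeas (Eventually.of_forall fun z => ?_)
  have hweight := ((bergmanWeightedSpace Ω φ k hu hM).weight_pos t z).le
  rw [Real.norm_of_nonneg (by positivity)]
  by_cases hz : z ∈ tsupport u
  · exact mul_le_mul_of_nonneg_right (hC z hz) (by positivity)
  · simp [bergmanWeightedSpace, image_eq_zero_of_notMem_tsupport hz]

end Path

theorem log_fredholm_determinant_derivative_general
    {Ω : Set (Fin n → ℂ)} (hΩ : IsOpen Ω) {φ : (Fin n → ℂ) → ℝ} (hφ : ContinuousOn φ Ω)
    {u : (Fin n → ℂ) → ℝ} (hu : Continuous u) (huc : HasCompactSupport u) (hus : tsupport u ⊆ Ω)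
    (k : ℝ) {K : ℝ → (Fin n → ℂ) → (Fin n → ℂ) → ℂ}
    (hK : ∀ t ∈ Set.Icc (0 : ℝ) 1, IsBergmanKernel Ω (fun z => k * (φ z + t * u z)) (K t))
    {S : ℝ → ℕ → ℂ}
    (hS : ∀ (t : ℝ) (m : ℕ), S t m =
      ∫ z : Fin m → (Fin n → ℂ) in Set.univ.pi fun _ : Fin m => Ω,
        Matrix.det (Matrix.of fun i j : Fin m => K 0 (z i) (z j)) *
          ((∏ l : Fin m, (Real.exp (-(k * (t * u (z l)))) - 1) * Real.exp (-(k * φ (z l)))) : ℝ)) :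
    (∀ t ∈ Set.Icc (0 : ℝ) 1,
      (∑' m : ℕ, ((m.factorial : ℝ))⁻¹ • S t m).im = 0 ∧
      0 < (∑' m : ℕ, ((m.factorial : ℝ))⁻¹ • S t m).re) ∧
    ∀ t ∈ Set.Icc (0 : ℝ) 1,
      HasDerivWithinAt
        (fun s : ℝ => Real.log (∑' m : ℕ, ((m.factorial : ℝ))⁻¹ • S s m).re)
        (-k * ∫ w in Ω, (K t w w).re * u w * Real.exp (-(k * (φ w + t * u w))))
        (Set.Icc (0 : ℝ) 1) t := by
  obtain ⟨M, hM⟩ : ∃ M : NNReal, ∀ z, |u z| ≤ M := by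
    obtain ⟨C, hC⟩ := hu.bounded_above_of_compact_support huc
    exact ⟨⟨C, (norm_nonneg _).trans (hC 0)⟩, hC⟩
  have hreproducing : ∀ t ∈ Set.Icc (0 : ℝ) 1,
      (bergmanWeightedSpace Ω φ k hu hM).IsReproducingKernel Ω t (K t) :=
    fun t ht => (hK t ht).isReproducingKernel hu hM hΩ hφ
  have hmem : ∀ᵐ z ∂volume.restrict Ω, z ∈ Ω := ae_restrict_mem hΩ.measurableSet
  have hint := (hK 0 unitInterval.zero_mem).integrable_norm_apply_self_mul_weight hu hM
    hΩ hφ huc hus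
  simp only [hS, ← fredholmDet_weight_sub_bergmanWeightedSpace hu hM]
  refine ⟨fun t ht => ?_, fun t ht => ?_⟩
  · obtain ⟨hre, him⟩ :=
      Complex.pos_iff.1 (WeightedSpace.fredholmDet_pos hreproducing hmem hint ht)
    exact ⟨him.symm, hre⟩
  · refine (WeightedSpace.hasDerivWithinAt_log_fredholmDet hreproducing hmem hint ht).congr_deriv ?_
    simp only [← integral_const_mul, weight_bergmanWeightedSpace]
    congr! 2
    simp only [bergmanWeightedSpace]
    ring

/-- Fix `k` and, for `t ∈ [0,1]`, let `K t` be the reproducing kernel of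
`H(k(φ+tu))` and
`S t m = ∫_{Ω^m} det[K 0 (z i, z j)] ∏_l (e^{-k t u(z_l)} - 1) e^{-k φ(z_l)} dλ`.
Then `S_k(t) = ∑_m S t m / m!` is a positive real number for each `t ∈ [0,1]`, and
`t ↦ log S_k(t)` is differentiable with
`(d/dt) log S_k(t) = -k ∫_Ω K t (w,w) u(w) e^{-k(φ(w)+t u(w))} dλ(w)`. -/
theorem log_fredholm_determinant_derivative
    (Ω : Set (Fin n → ℂ)) (hΩo : IsOpen Ω) (hΩconn : IsConnected Ω)
    (hΩb : Bornology.IsBounded Ω) (hΩp : Pseudoconvex Ω)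
    (φ : (Fin n → ℂ) → ℝ) (hφ : SPSHOn Ω φ)
    (u : (Fin n → ℂ) → ℝ) (hu : ContDiff ℝ (⊤ : ℕ∞) u) (huc : HasCompactSupport u)
    (hus : tsupport u ⊆ Ω) (hadm : SPSHOn Ω (fun z => φ z + u z))
    (k : ℕ)
    (K : ℝ → (Fin n → ℂ) → (Fin n → ℂ) → ℂ)
    (hKmem : ∀ t ∈ Set.Icc (0:ℝ) 1, ∀ w ∈ Ω,
      MemBergman Ω (fun z => k * (φ z + t * u z)) (fun z => K t z w))
    (hKrep : ∀ t ∈ Set.Icc (0:ℝ) 1, ∀ w ∈ Ω, ∀ f,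
      MemBergman Ω (fun z => k * (φ z + t * u z)) f →
      wInner Ω (fun z => k * (φ z + t * u z)) f (fun z => K t z w) = f w)
    (S : ℝ → ℕ → ℂ)
    (hS : ∀ (t : ℝ) (m : ℕ), S t m =
      ∫ z : Fin m → (Fin n → ℂ) in Set.univ.pi fun _ : Fin m => Ω,
        Matrix.det (Matrix.of fun i j : Fin m => K 0 (z i) (z j)) *
          ((∏ l : Fin m, (Real.exp (-(k * (t * u (z l)))) - 1) * Real.exp (-(k * φ (z l)))) : ℝ)) :
    (∀ t ∈ Set.Icc (0:ℝ) 1,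
      (∑' m : ℕ, ((m.factorial : ℝ))⁻¹ • S t m).im = 0 ∧
      0 < (∑' m : ℕ, ((m.factorial : ℝ))⁻¹ • S t m).re) ∧
    ∀ t ∈ Set.Icc (0:ℝ) 1,
      HasDerivWithinAt
        (fun s : ℝ => Real.log (∑' m : ℕ, ((m.factorial : ℝ))⁻¹ • S s m).re)
        (-(k : ℝ) * ∫ w in Ω, (K t w w).re * u w * Real.exp (-(k * (φ w + t * u w))))
        (Set.Icc (0:ℝ) 1) t :=
  log_fredholm_determinant_derivative_general hΩo hφ.1.continuousOn hu.continuous huc hus (k : ℝ)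
    (fun t ht => ⟨hKmem t ht, hKrep t ht⟩) hS
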